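/- arXiv:1203.3735 — 3 statements merged into one kernel-verified Lean document; each statement's English description precedes it below -/
import Mathlib

section
/- Let p ∈ ℝ[x,y,z] be a nonzero squarefree polynomial. Then the set of irreducible real algebraic curves γ in ℝ³ such that every point of γ is a common zero of p and of all three partial derivatives ∂p/∂x, ∂p/∂y, ∂p/∂z (i.e., the critical irreducible real algebraic curves of the zero set of p) is finite, of cardinality at most (deg p)². -/
/-!
Since `p` is squarefree, a suitable directional derivative `q = ∂ᵥp` is coprime to `p`
(`exists_direction`), and every critical curve lies in the common zero set of `p` and `q`.
It remains to see that coprime `f`, `g` of degrees `m`, `n` have at most `m * n` irreducible curves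
in common (`bezout_count`), which is done by comparing Hilbert functions.

Among the polynomials of degree at most `T`, the combinations `a f + b g` have
codimension at most `m n T + O(1)` (`finrank_sup_ge`), and they vanish on all the curves. On the
other hand, let `γ₁, …, γ_N` be distinct curves. Their vanishing ideals are primes, pairwise
incomparable because all have coordinate rings of transcendence degree one
(`eq_of_vanishingIdeal_le`). So there are `hᵢ` vanishing on every `γⱼ` except `γᵢ`, and on `γᵢ` some
coordinate `xᵢ` is transcendental. The products `hᵢ xᵢ ^ k` of degree at most `T` are linearly
independent as functions on the union of the curves (`linearIndependent_mul_pow`), so this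
codimension is at least `N T - O(1)`. Letting `T` grow gives `N ≤ m n`.
-/

open MvPolynomial

/-- An algebraic set in `Kⁿ`: the common zero locus of a set of polynomials. -/
def IsAlgSet (K : Type) [Field K] (n : ℕ) (V : Set (Fin n → K)) : Prop :=
  ∃ S : Set (MvPolynomial (Fin n) K), V = {x | ∀ p ∈ S, eval x p = 0}

/-- An irreducible algebraic set: nonempty, and not the union of two proper algebraic subsets. -/
def IsIrredAlgSet (K : Type) [Field K] (n : ℕ) (V : Set (Fin n → K)) : Prop :=
  IsAlgSet K n V ∧ V.Nonempty ∧
    ∀ V₁ V₂ : Set (Fin n → K), IsAlgSet K n V₁ → IsAlgSet K n V₂ →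
      V = V₁ ∪ V₂ → V₁ = V ∨ V₂ = V

/-- The vanishing ideal of a set `V ⊆ Kⁿ`. -/
def vanishingIdeal (K : Type) [Field K] (n : ℕ) (V : Set (Fin n → K)) :
    Ideal (MvPolynomial (Fin n) K) where
  carrier := {p | ∀ x ∈ V, eval x p = 0}
  add_mem' := by
    intro a b ha hb x hx
    simp [ha x hx, hb x hx]
  zero_mem' := by
    intro x hx
    simp
  smul_mem' := by
    intro c p hp x hx
    simp [smul_eq_mul, hp x hx]

/-- Transcendence degree of a `K`-algebra `A`: supremum of cardinalities of
algebraically independent subsets. -/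
noncomputable def trdegOver (K A : Type*) [Field K] [CommRing A] [Algebra K A] : Cardinal :=
  ⨆ s : {s : Set A // AlgebraicIndependent K ((↑) : s → A)}, Cardinal.mk s.1

/-- The dimension of an irreducible algebraic set: the transcendence degree over `K`
of its coordinate ring `K[x₁,…,xₙ]/I(V)`. -/
noncomputable def irredAlgSetDim (K : Type) [Field K] (n : ℕ) (V : Set (Fin n → K)) : Cardinal :=
  trdegOver K (MvPolynomial (Fin n) K ⧸ vanishingIdeal K n V)

/-- The dimension of an algebraic set: the maximum of the dimensions of the irreducible
algebraic sets contained in it. -/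
noncomputable def algSetDim (K : Type) [Field K] (n : ℕ) (V : Set (Fin n → K)) : Cardinal :=
  ⨆ W : {W : Set (Fin n → K) // IsIrredAlgSet K n W ∧ W ⊆ V}, irredAlgSetDim K n W.1

/-- An irreducible algebraic curve: an irreducible algebraic set of dimension 1. -/
def IsIrredAlgCurve (K : Type) [Field K] (n : ℕ) (V : Set (Fin n → K)) : Prop :=
  IsIrredAlgSet K n V ∧ irredAlgSetDim K n V = 1

/-- An algebraic curve: an algebraic set of dimension 1. -/
def IsAlgCurve (K : Type) [Field K] (n : ℕ) (V : Set (Fin n → K)) : Prop :=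
  IsAlgSet K n V ∧ algSetDim K n V = 1

/-- The componentwise inclusion `ℝⁿ ↪ ℂⁿ`. -/
def inclC (n : ℕ) (x : Fin n → ℝ) : Fin n → ℂ := fun i => (x i : ℂ)

/-! ### Algebra: transcendence degree and derivatives -/

/-- A nonzero element `r` of the kernel of `φ` and a lift `l` of an element transcendental in the
target are algebraically independent: if `r` were algebraic over `ℝ[l]`, it would divide some
nonzero `c(l)`, and applying `φ` would give `c(φ l) = 0`. Hence a proper quotient of a domain of
transcendence degree one is algebraic over `ℝ`. -/
lemma two_le_trdeg_of_map_eq_zero {A B : Type} [CommRing A] [IsDomain A] [CommRing B]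
    [Algebra ℝ A] [Algebra ℝ B] (φ : A →ₐ[ℝ] B) (l r : A)
    (hl : Transcendental ℝ (φ l)) (hr : r ≠ 0) (hφ : φ r = 0) :
    (2 : Cardinal) ≤ Algebra.trdeg ℝ A := by
  have hl' : AlgebraicIndependent ℝ (fun _ : Unit => l) :=
    algebraicIndependent_unique_type_iff.2 fun h => hl (h.algHom φ)
  have key : Transcendental (Algebra.adjoin ℝ (Set.range fun _ : Unit => l)) r := by
    intro h
    obtain ⟨c, hc, t, ht⟩ := h.exists_nonzero_dvd (mem_nonZeroDivisors_of_ne_zero hr)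
    obtain ⟨c, hcm⟩ := c
    have hcm' := hcm
    rw [Set.range_const, Algebra.adjoin_singleton_eq_range_aeval] at hcm'
    obtain ⟨q, rfl⟩ := hcm'
    apply hl
    refine ⟨q, ?_, ?_⟩
    · rintro rfl
      exact hc (Subtype.ext (by simp))
    · have := congrArg φ ht
      rw [map_mul, hφ, zero_mul] at this
      rw [Polynomial.aeval_algHom_apply]
      exact this
  have := ((hl'.option_iff_transcendental r).2 key).cardinalMk_le_trdeg
  simpa [one_add_one_eq_two] using this

/-- There are `∑_{n ≤ D} (n + 2 choose 2) = (D + 3 choose 3)` monomials of degree at most `D`. -/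
lemma finrank_restrictTotalDegree (D : ℕ) :
    Module.finrank ℝ (restrictTotalDegree (Fin 3) ℝ D) = (D + 3).choose 3 := by
  classical
  rw [restrictTotalDegree, Module.finrank_eq_nat_card_basis (basisRestrictSupport ℝ _)]
  let T : Finset (Fin 3 →₀ ℕ) :=
    (Finset.range (D + 1)).biUnion fun n => (Finset.univ : Finset (Fin 3)).finsuppAntidiag n
  have hT : {n : Fin 3 →₀ ℕ | n.sum (fun _ e => e) ≤ D} = (T : Set _) := by
    ext n
    simp [T, Finset.mem_finsuppAntidiag, Finsupp.sum_fintype]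
  rw [hT, Nat.card_coe_set_eq, Set.ncard_coe_finset, Finset.card_biUnion]
  · simp_rw [Finset.card_finsuppAntidiag_nat_eq_choose]
    rw [← Nat.sum_range_add_choose D 2]
    refine Finset.sum_congr rfl fun n _ => ?_
    rw [Finset.card_univ, Fintype.card_fin, show 3 + n - 1 = n + 2 by omega,
      Nat.choose_symm_add]
  · intro a _ b _ hab
    rw [Function.onFun, Finset.disjoint_left]
    intro n hn hn'
    simp only [Finset.mem_finsuppAntidiag] at hn hn'
    exact hab (hn.1.symm.trans hn'.1)

lemma totalDegree_pderiv_lt (i : Fin 3) (f : MvPolynomial (Fin 3) ℝ) (hne : pderiv i f ≠ 0) :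
    (pderiv i f).totalDegree < f.totalDegree := by
  obtain ⟨m, hm, hm'⟩ := Finset.exists_mem_eq_sup _ (support_nonempty.2 hne)
    (fun m : Fin 3 →₀ ℕ => m.sum fun _ e => e)
  rw [mem_support_iff, coeff_pderiv] at hm
  have h2 := le_totalDegree (mem_support_iff.2 (left_ne_zero_of_mul hm))
  rw [Finsupp.sum_add_index' (fun _ => rfl) (fun _ _ _ => rfl),
    Finsupp.sum_single_index rfl] at h2
  change totalDegree _ = _ at hm'
  omega

lemma totalDegree_pderiv_le (i : Fin 3) (f : MvPolynomial (Fin 3) ℝ) :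
    (pderiv i f).totalDegree ≤ f.totalDegree := by
  by_cases h : pderiv i f = 0
  · simp [h]
  · exact (totalDegree_pderiv_lt i f h).le

/-- An irreducible `f` cannot divide all its partial derivatives: by degree they would all vanish,
so `f` would be constant. -/
lemma exists_pderiv_not_dvd (f : MvPolynomial (Fin 3) ℝ) (hf : Irreducible f) :
    ∃ i, ¬ f ∣ pderiv i f := by
  by_contra! h
  have h0 : ∀ i, pderiv i f = 0 := by
    intro i
    by_contra hne
    obtain ⟨g, hg⟩ := h i
    have hg0 : g ≠ 0 := by rintro rfl; simp at hg; exact hne hg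
    have h1 := totalDegree_mul_of_isDomain hf.ne_zero hg0
    rw [← hg] at h1
    have := totalDegree_pderiv_lt i f hne
    omega
  have : f = C (coeff 0 f) := by
    ext m
    rw [coeff_C]
    split_ifs with hm
    · rw [hm]
    · obtain ⟨i, hi⟩ := Finsupp.ne_iff.1 (Ne.symm hm : m ≠ 0)
      have := congrArg (coeff (m - Finsupp.single i 1)) (h0 i)
      have hle : Finsupp.single i 1 ≤ m := by
        rw [Finsupp.single_le_iff]
        exact Nat.one_le_iff_ne_zero.2 hi
      rw [coeff_pderiv, tsub_add_cancel_of_le hle, coeff_zero] at this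
      exact (mul_eq_zero.1 this).resolve_right (by positivity)
  apply hf.not_isUnit
  rw [this]
  refine (IsUnit.mk0 _ ?_).map C
  intro h
  apply hf.ne_zero
  rw [this, h, C_0]

/-- Some directional derivative of a squarefree `p` is coprime to `p`. For each irreducible factor
`f` of `p` the directions `v` with `f ∣ ∂ᵥp` form a proper subspace of `ℝ³`, and finitely many
proper subspaces do not cover `ℝ³`. -/
lemma exists_direction (p : MvPolynomial (Fin 3) ℝ) (hp : p ≠ 0) (hsf : Squarefree p) :
    ∃ v : Fin 3 → ℝ, IsRelPrime p (∑ i, v i • pderiv i p) := by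
  classical
  let Φ : (Fin 3 → ℝ) →ₗ[ℝ] MvPolynomial (Fin 3) ℝ :=
    Fintype.linearCombination ℝ fun i => pderiv i p
  let U : MvPolynomial (Fin 3) ℝ → Submodule ℝ (Fin 3 → ℝ) := fun f =>
    ((Ideal.span {f}).restrictScalars ℝ).comap Φ
  have hU : ∀ f v, v ∈ U f ↔ f ∣ ∑ i, v i • pderiv i p := fun f v => by
    simp [U, Φ, Fintype.linearCombination_apply, Ideal.mem_span_singleton]
  have htop : ⊤ ∉ (UniqueFactorizationMonoid.factors p).toFinset.image U := by
    intro h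
    obtain ⟨f, hf, hfU⟩ := Finset.mem_image.1 h
    rw [Multiset.mem_toFinset] at hf
    have hirr := UniqueFactorizationMonoid.irreducible_of_factor f hf
    obtain ⟨g, hg⟩ := UniqueFactorizationMonoid.dvd_of_mem_factors hf
    obtain ⟨i, hi⟩ := exists_pderiv_not_dvd f hirr
    have h1 : f ∣ pderiv i p := by
      have := (hU f (Pi.single i 1)).1 (hfU ▸ Submodule.mem_top)
      simpa [Pi.single_apply] using this
    rw [hg, pderiv_mul, dvd_add_left (dvd_mul_right _ _)] at h1
    rcases hirr.prime.dvd_or_dvd h1 with h2 | ⟨k, rfl⟩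
    · exact hi h2
    · exact hirr.not_isUnit (hsf f ⟨k, by rw [hg]; ring⟩)
  have hne := Subspace.biUnion_ne_univ_of_top_notMem htop
  obtain ⟨v, hv⟩ := (Set.ne_univ_iff_exists_notMem _).1 hne
  refine ⟨v, WfDvdMonoid.isRelPrime_of_no_irreducible_factors (fun h => hp h.1) ?_⟩
  intro f hf hfp hfq
  obtain ⟨q, hq, hfq'⟩ := UniqueFactorizationMonoid.exists_mem_factors_of_dvd hp hf hfp
  apply hv
  simp only [Set.mem_iUnion]
  exact ⟨U q, Finset.mem_image_of_mem _ (Multiset.mem_toFinset.2 hq),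
    (hU q v).2 (hfq'.dvd_iff_dvd_left.1 hfq)⟩

/-! ### Counting dimensions -/

lemma finrank_map_mulLeft (f : MvPolynomial (Fin 3) ℝ) (hf : f ≠ 0) (D : ℕ) :
    Module.finrank ℝ ((restrictTotalDegree (Fin 3) ℝ D).map (LinearMap.mulLeft ℝ f)) =
      (D + 3).choose 3 := by
  rw [← finrank_restrictTotalDegree]
  exact (LinearEquiv.finrank_eq (Submodule.equivMapOfInjective _
    (fun _ _ h => mul_left_cancel₀ hf h) _)).symm

/-- Lower bound for the space of combinations `a f + b g` of bounded degree. By coprimality,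
the multiples of `f` which are multiples of `g` are multiples of `f g`, which bounds the
intersection of the two summands. -/
lemma finrank_sup_ge (f g : MvPolynomial (Fin 3) ℝ) (hf : f ≠ 0) (hg : g ≠ 0)
    (hfg : IsRelPrime f g) (E : ℕ) :
    (E + g.totalDegree + 3).choose 3 + (E + f.totalDegree + 3).choose 3 ≤
      Module.finrank ℝ
        ((restrictTotalDegree (Fin 3) ℝ (E + g.totalDegree)).map (LinearMap.mulLeft ℝ f) ⊔
          (restrictTotalDegree (Fin 3) ℝ (E + f.totalDegree)).map (LinearMap.mulLeft ℝ g) :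
          Submodule ℝ _) + (E + 3).choose 3 := by
  rw [← finrank_map_mulLeft f hf (E + g.totalDegree), ← finrank_map_mulLeft g hg,
    ← Submodule.finrank_sup_add_finrank_inf_eq, ← finrank_map_mulLeft (f * g) (mul_ne_zero hf hg) E]
  gcongr
  refine Submodule.finrank_mono ?_
  rintro _ ⟨⟨a, ha, rfl⟩, ⟨b, hb, hab⟩⟩
  simp only [SetLike.mem_coe, mem_restrictTotalDegree, LinearMap.mulLeft_apply] at ha hb hab
  obtain ⟨k, rfl⟩ : g ∣ a := hfg.symm.dvd_of_dvd_mul_left ⟨b, hab.symm⟩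
  refine ⟨k, ?_, by simp⟩
  rw [SetLike.mem_coe, mem_restrictTotalDegree]
  rcases eq_or_ne k 0 with rfl | hk
  · simp
  rw [totalDegree_mul_of_isDomain hg hk] at ha
  omega

/-- Both sides of the hypothesis grow linearly in `s` once the binomials are combined: with slope
`N` on one side and `m * n` on the other, the latter being the mixed second difference of
`x ↦ (x + 3 choose 3)`. -/
lemma card_le_of_growth (N m n c : ℕ)
    (h : ∀ s, N * (m + n + s + 1) + ((c + s + n + 3).choose 3 + (c + s + m + 3).choose 3) ≤
      (c + s + m + n + 3).choose 3 + (c + s + 3).choose 3) : N ≤ m * n := by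
  have hc : ∀ x : ℕ, ((x + 3).choose 3) * 6 = (x + 1) * (x + 2) * (x + 3) := by
    intro x
    have := Nat.descFactorial_eq_factorial_mul_choose (x + 3) 3
    simp [Nat.descFactorial, Nat.factorial] at this
    linarith
  by_contra! hN
  -- A value of `s` exceeding the constant terms, so that only the slopes matter.
  set s := m * n * (2 * c + m + n + 4) with hs
  have h1 := h s
  have h2 := hc (c + s + n)
  have h3 := hc (c + s + m)
  have h4 := hc (c + s + m + n)
  have h5 := hc (c + s)
  have h6 : 2 * (N * (m + n + s + 1)) ≤ m * n * (2 * (c + s) + m + n + 4) := by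
    nlinarith
  have h7 : (m * n + 1) * (m + n + s + 1) ≤ N * (m + n + s + 1) := Nat.mul_le_mul_right _ hN
  nlinarith [Nat.zero_le (m * n * (m + n))]

/-- If `h i` vanishes modulo every `I j` except `I i`, and `l i` is transcendental modulo `I i`, then
the products `h i * l i ^ k` are independent modulo `⋂ I j`: modulo `I j` only the terms with
`i = j` survive, and there `h j` cancels. -/
lemma linearIndependent_mul_pow {N : ℕ} (I : Fin N → Ideal (MvPolynomial (Fin 3) ℝ))
    (hI : ∀ i, (I i).IsPrime) (l h : Fin N → MvPolynomial (Fin 3) ℝ)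
    (hl : ∀ i, Transcendental ℝ (Ideal.Quotient.mkₐ ℝ (I i) (l i)))
    (hh : ∀ i, h i ∉ I i) (hh' : ∀ i j, i ≠ j → h i ∈ I j) (D : ℕ) :
    LinearIndependent ℝ
      (LinearMap.pi (fun i => (Ideal.Quotient.mkₐ ℝ (I i)).toLinearMap) ∘
        fun x : Fin N × Fin D => h x.1 * l x.1 ^ (x.2 : ℕ)) := by
  rw [Fintype.linearIndependent_iff]
  rintro a ha ⟨j, k⟩
  have h1 := congrFun ha j
  have h0 : ∀ i, i ≠ j → Ideal.Quotient.mk (I j) (h i) = 0 := fun i hij =>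
    Ideal.Quotient.eq_zero_iff_mem.2 (hh' i j hij)
  simp only [Finset.sum_apply, Pi.smul_apply, Function.comp_apply, LinearMap.pi_apply,
    AlgHom.toLinearMap_apply, map_mul, map_pow, Pi.zero_apply, Ideal.Quotient.mkₐ_eq_mk,
    Fintype.sum_prod_type] at h1
  rw [Finset.sum_eq_single j (fun i _ hij => by simp [h0 i hij]) (by simp)] at h1
  have hdom := (Ideal.Quotient.isDomain_iff_prime (I j)).2 (hI j)
  have h2 : Ideal.Quotient.mk (I j) (h j) *
      Polynomial.aeval (Ideal.Quotient.mkₐ ℝ (I j) (l j))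
        (∑ k : Fin D, Polynomial.monomial (k : ℕ) (a (j, k))) = 0 := by
    rw [← h1, map_sum, Finset.mul_sum]
    refine Finset.sum_congr rfl fun k _ => ?_
    change _ = Ideal.Quotient.mkₐ ℝ (I j) (a (j, k) • (h j * l j ^ (k : ℕ)))
    have hC : algebraMap ℝ (MvPolynomial (Fin 3) ℝ ⧸ I j) (a (j, k)) =
        Ideal.Quotient.mk (I j) (C (a (j, k))) := rfl
    rw [Polynomial.aeval_monomial, smul_eq_C_mul, hC, Ideal.Quotient.mkₐ_eq_mk, map_mul, map_mul,
      map_pow]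
    ring
  have h3 := (mul_eq_zero.1 h2).resolve_left fun h => hh j (Ideal.Quotient.eq_zero_iff_mem.1 h)
  have h4 := transcendental_iff.1 (hl j) _ h3
  have h5 := congrArg (fun q => Polynomial.coeff q (k : ℕ)) h4
  simpa [Polynomial.finsetSum_coeff, Polynomial.coeff_monomial, Fin.val_inj] using h5

/-- A Bézout bound in `ℝ³`: pairwise incomparable primes containing the coprime polynomials `f` and
`g`, each with a coordinate transcendental modulo it, number at most `deg f * deg g`. Polynomials of
degree at most `T` contain both the bounded-degree part of `(f, g)` and a space of
dimension about `N * T` on which no nonzero element vanishes modulo all the primes. -/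
lemma bezout_count {N : ℕ} (f g : MvPolynomial (Fin 3) ℝ) (hf : f ≠ 0) (hg : g ≠ 0)
    (hfg : IsRelPrime f g) (I : Fin N → Ideal (MvPolynomial (Fin 3) ℝ))
    (hI : ∀ i, (I i).IsPrime) (hfI : ∀ i, f ∈ I i) (hgI : ∀ i, g ∈ I i)
    (l : Fin N → Fin 3) (hl : ∀ i, Transcendental ℝ (Ideal.Quotient.mkₐ ℝ (I i) (X (l i))))
    (hinc : ∀ i j, i ≠ j → ¬ I j ≤ I i) : N ≤ f.totalDegree * g.totalDegree := by
  classical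
  have hr : ∀ i j, ∃ r, i ≠ j → r ∈ I j ∧ r ∉ I i := fun i j => by
    by_cases hij : i = j
    · exact ⟨0, fun h => (h hij).elim⟩
    · obtain ⟨r, h1, h2⟩ := SetLike.not_le_iff_exists.1 (hinc i j hij)
      exact ⟨r, fun _ => ⟨h1, h2⟩⟩
  choose r hr using hr
  -- `h i` lies in every prime but `I i`.
  let h : Fin N → MvPolynomial (Fin 3) ℝ := fun i => ∏ j ∈ Finset.univ.erase i, r i j
  have hh : ∀ i, h i ∉ I i := fun i hi => by
    have := hI i
    obtain ⟨j, hj, hj'⟩ := Ideal.IsPrime.prod_mem_iff.1 hi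
    exact (hr i j (Finset.ne_of_mem_erase hj).symm).2 hj'
  have hh' : ∀ i j, i ≠ j → h i ∈ I j := fun i j hij =>
    Ideal.mem_of_dvd _ (Finset.dvd_prod_of_mem _ (Finset.mem_erase.2 ⟨hij.symm, Finset.mem_univ j⟩))
      (hr i j hij).1
  set c := Finset.univ.sup fun i => (h i).totalDegree with hc
  refine card_le_of_growth N f.totalDegree g.totalDegree c fun s => ?_
  set m := f.totalDegree
  set n := g.totalDegree
  set P := restrictTotalDegree (Fin 3) ℝ (c + s + m + n) with hP
  set v : Fin N × Fin (m + n + s + 1) → MvPolynomial (Fin 3) ℝ :=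
    fun x => h x.1 * X (l x.1) ^ (x.2 : ℕ) with hv
  set W := (restrictTotalDegree (Fin 3) ℝ (c + s + n)).map (LinearMap.mulLeft ℝ f) ⊔
          (restrictTotalDegree (Fin 3) ℝ (c + s + m)).map (LinearMap.mulLeft ℝ g) with hW
  have hli := linearIndependent_mul_pow I hI (fun i => X (l i)) h hl hh hh' (m + n + s + 1)
  have hdis := Submodule.range_ker_disjoint hli
  have hfin := finrank_span_eq_card (hli.of_comp _)
  have hWker : W ≤ LinearMap.ker
      (LinearMap.pi (fun i => (Ideal.Quotient.mkₐ ℝ (I i)).toLinearMap)) := by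
    refine sup_le ?_ ?_ <;> rintro _ ⟨a, -, rfl⟩ <;> rw [LinearMap.mem_ker] <;> funext i
    · simp [Ideal.Quotient.eq_zero_iff_mem.2 (hfI i)]
    · simp [Ideal.Quotient.eq_zero_iff_mem.2 (hgI i)]
  have hWP : W ≤ P := by
    refine sup_le ?_ ?_ <;> rintro _ ⟨a, ha, rfl⟩ <;>
      rw [SetLike.mem_coe, mem_restrictTotalDegree] at ha <;>
      rw [hP, mem_restrictTotalDegree, LinearMap.mulLeft_apply] <;>
      refine (totalDegree_mul _ _).trans ?_ <;> omega
  have hVP : Submodule.span ℝ (Set.range v) ≤ P := by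
    rw [Submodule.span_le]
    rintro _ ⟨⟨i, k⟩, rfl⟩
    rw [SetLike.mem_coe, hP, mem_restrictTotalDegree]
    have h1 : (h i).totalDegree ≤ c := Finset.le_sup (f := fun i => (h i).totalDegree)
      (Finset.mem_univ i)
    have h2 := totalDegree_mul (h i) (X (l i) ^ (k : ℕ))
    rw [totalDegree_X_pow] at h2
    have := k.2
    change (h i * X (l i) ^ (k : ℕ)).totalDegree ≤ _
    omega
  have : FiniteDimensional ℝ W := Submodule.finiteDimensional_of_le hWP
  have : FiniteDimensional ℝ (Submodule.span ℝ (Set.range v)) :=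
    Submodule.finiteDimensional_of_le hVP
  have h1 := Submodule.finrank_mono (sup_le hVP hWP)
  have h2 := Submodule.finrank_sup_add_finrank_inf_eq (Submodule.span ℝ (Set.range v)) W
  rw [(hdis.mono_right hWker).eq_bot, finrank_bot] at h2
  have h3 := finrank_sup_ge f g hf hg hfg (c + s)
  change (c + s + n + 3).choose 3 + (c + s + m + 3).choose 3 ≤ Module.finrank ℝ W + _ at h3
  rw [finrank_restrictTotalDegree] at h1
  simp only [Fintype.card_prod, Fintype.card_fin] at hfin
  change Module.finrank ℝ (Submodule.span ℝ (Set.range v)) = _ at hfin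
  omega

/-! ### Irreducible curves -/

lemma vanishingIdeal_isPrime {V : Set (Fin 3 → ℝ)} (hV : IsIrredAlgSet ℝ 3 V) :
    (vanishingIdeal ℝ 3 V).IsPrime := by
  obtain ⟨⟨S, hS⟩, ⟨x, hx⟩, hirr⟩ := hV
  refine ⟨fun h => ?_, fun {f g} hfg => ?_⟩
  · simpa using (show (1 : MvPolynomial (Fin 3) ℝ) ∈ vanishingIdeal ℝ 3 V from h ▸ trivial) x hx
  · have halg : ∀ q : MvPolynomial (Fin 3) ℝ, IsAlgSet ℝ 3 (V ∩ {x | eval x q = 0}) := fun q =>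
      ⟨insert q S, by ext; simp [hS, and_comm]⟩
    rcases hirr _ _ (halg f) (halg g) (by
      ext y
      have : y ∈ V → eval y f = 0 ∨ eval y g = 0 := fun hy => by
        have := hfg y hy
        rwa [map_mul, mul_eq_zero] at this
      simp only [Set.mem_union, Set.mem_inter_iff, Set.mem_ofPred_eq]
      tauto) with h | h
    · exact Or.inl fun y hy => (h.ge hy).2
    · exact Or.inr fun y hy => (h.ge hy).2

lemma subset_of_vanishingIdeal_le {V W : Set (Fin 3 → ℝ)} (hV : IsAlgSet ℝ 3 V)
    (h : vanishingIdeal ℝ 3 V ≤ vanishingIdeal ℝ 3 W) : W ⊆ V := by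
  obtain ⟨S, rfl⟩ := hV
  intro x hx p hp
  exact h (fun y hy => hy p hp) x hx

/-- Otherwise all coordinates, hence the whole coordinate ring, would be algebraic over `ℝ`,
contradicting dimension one. -/
lemma exists_transcendental_coord {V : Set (Fin 3 → ℝ)} (hV : IsIrredAlgCurve ℝ 3 V) :
    ∃ i, Transcendental ℝ (Ideal.Quotient.mkₐ ℝ (vanishingIdeal ℝ 3 V) (X i)) := by
  by_contra! h
  have := vanishingIdeal_isPrime hV.1
  have h1 : Algebra.trdeg ℝ (MvPolynomial (Fin 3) ℝ ⧸ vanishingIdeal ℝ 3 V) = 1 := hV.2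
  have h2 : Algebra.IsAlgebraic ℝ (MvPolynomial (Fin 3) ℝ ⧸ vanishingIdeal ℝ 3 V) := by
    refine ⟨fun a => ?_⟩
    obtain ⟨q, rfl⟩ := Ideal.Quotient.mkₐ_surjective ℝ _ a
    induction q using MvPolynomial.induction_on with
    | C r => exact isAlgebraic_algebraMap r
    | add p q hp hq => rw [map_add]; exact hp.add hq
    | mul_X p i hp => rw [map_mul]; exact hp.mul (not_not.1 (h i))
  rw [trdeg_eq_zero] at h1
  exact zero_ne_one h1

/-- An irreducible curve contains no other irreducible curve. -/
lemma eq_of_vanishingIdeal_le {V W : Set (Fin 3 → ℝ)} (hV : IsIrredAlgCurve ℝ 3 V)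
    (hW : IsIrredAlgCurve ℝ 3 W) (h : vanishingIdeal ℝ 3 V ≤ vanishingIdeal ℝ 3 W) : V = W := by
  refine Set.Subset.antisymm ?_ (subset_of_vanishingIdeal_le hV.1.1 h)
  refine subset_of_vanishingIdeal_le hW.1.1 fun r hr => ?_
  by_contra hrV
  have := vanishingIdeal_isPrime hV.1
  obtain ⟨i, hi⟩ := exists_transcendental_coord hW
  have h1 : Algebra.trdeg ℝ (MvPolynomial (Fin 3) ℝ ⧸ vanishingIdeal ℝ 3 V) = 1 := hV.2
  have h2 := two_le_trdeg_of_map_eq_zero (Ideal.Quotient.factorₐ ℝ h)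
    (Ideal.Quotient.mk _ (X i)) (Ideal.Quotient.mk _ r) (by simpa using hi)
    (fun h0 => hrV (Ideal.Quotient.eq_zero_iff_mem.1 h0))
    (by simpa using Ideal.Quotient.eq_zero_iff_mem.2 hr)
  rw [h1] at h2
  exact absurd h2 (by simp)

/-- The zero set of a nonzero squarefree polynomial `p ∈ ℝ[x,y,z]` contains at most
`(deg p)²` critical irreducible real algebraic curves, i.e. irreducible real algebraic
curves at every point of which `p` and its three partial derivatives vanish. -/
theorem critical_curves_card_le (p : MvPolynomial (Fin 3) ℝ) (hp : p ≠ 0)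
    (hsf : Squarefree p) :
    {γ : Set (Fin 3 → ℝ) | IsIrredAlgCurve ℝ 3 γ ∧
        ∀ x ∈ γ, eval x p = 0 ∧ ∀ i : Fin 3, eval x (pderiv i p) = 0}.Finite ∧
      {γ : Set (Fin 3 → ℝ) | IsIrredAlgCurve ℝ 3 γ ∧
        ∀ x ∈ γ, eval x p = 0 ∧ ∀ i : Fin 3, eval x (pderiv i p) = 0}.ncard ≤
          p.totalDegree ^ 2 := by
  obtain ⟨v, hv⟩ := exists_direction p hp hsf
  set q := ∑ i, v i • pderiv i p with hq
  set Γ := {γ : Set (Fin 3 → ℝ) | IsIrredAlgCurve ℝ 3 γ ∧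
        ∀ x ∈ γ, eval x p = 0 ∧ ∀ i : Fin 3, eval x (pderiv i p) = 0} with hΓ
  rcases eq_or_ne q 0 with hq0 | hq0
  -- Here `p` is coprime to `0`, hence a nonzero constant, and there are no critical curves at all.
  · rw [hq0] at hv
    have hu : IsUnit p := hv dvd_rfl (dvd_zero p)
    have hempty : Γ = ∅ := by
      refine Set.eq_empty_of_forall_notMem fun γ hγ => ?_
      obtain ⟨x, hx⟩ := hγ.1.1.2.1
      exact (hu.map (eval x)).ne_zero (hγ.2 x hx).1
    rw [hempty]
    simp
  have hdeg : q.totalDegree ≤ p.totalDegree := by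
    rw [← mem_restrictTotalDegree]
    refine Submodule.sum_mem _ fun i _ => Submodule.smul_mem _ _ ?_
    rw [mem_restrictTotalDegree]
    exact totalDegree_pderiv_le i p
  have key : ∀ T : Finset (Set (Fin 3 → ℝ)), (T : Set _) ⊆ Γ → T.card ≤ p.totalDegree ^ 2 := by
    intro T hT
    let e := T.equivFin.symm
    have hc : ∀ i, (e i : Set (Fin 3 → ℝ)) ∈ Γ := fun i => hT (e i).2
    choose l hl using fun i => exists_transcendental_coord (hc i).1
    calc T.card ≤ p.totalDegree * q.totalDegree :=
          bezout_count p q hp hq0 hv (fun i => vanishingIdeal ℝ 3 (e i))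
            (fun i => vanishingIdeal_isPrime (hc i).1.1)
            (fun i x hx => ((hc i).2 x hx).1)
            (fun i x hx => by simp [hq, smul_eval, ((hc i).2 x hx).2])
            l hl
            (fun i j hij hle => hij (e.injective (Subtype.ext
              (eq_of_vanishingIdeal_le (hc j).1 (hc i).1 hle).symm)))
      _ ≤ _ := by rw [sq]; gcongr
  have hfin : Γ.Finite := by
    by_contra hinf
    obtain ⟨T, hT, hcard⟩ := Set.Infinite.exists_subset_card_eq hinf (p.totalDegree ^ 2 + 1)
    have := key T hT
    omega
  refine ⟨hfin, ?_⟩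
  rw [Set.ncard_eq_toFinset_card _ hfin]
  exact key _ (by simp)
end

section
/- For every integer b ≥ 1 there is a constant c_b > 0 (depending only on b) with the following property. Let Γ be a finite collection of polynomially parametrised curves in ℝ³, where each γ ∈ Γ is a map γ : ℝ → ℝ³ whose three coordinate functions are polynomials in ℝ[t], not all constant, of degrees at most b. For x ∈ ℝ³, let T_x^Γ be the set of one-dimensional linear subspaces of ℝ³ of the form span{γ'(t)} for some γ ∈ Γ and t ∈ ℝ with γ(t) = x and γ'(t) ≠ 0. Call x a joint for Γ if T_x^Γ contains three lines with linearly independent direction vectors, and let N(x) be the number of unordered triples of elements of T_x^Γ whose direction vectors are linearly independent. Then the set J of joints of Γ is finite and ∑_{x ∈ J} N(x)^{1/2} ≤ c_b · |Γ|^{3/2}. -/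
/-!
The proof is the polynomial method with unequal orders of vanishing. Write `m = 3bN + 1` for a
large integer `N`. Give every joint `p` of a finite set `S` a handicap `α p`, and let `σ` be the
largest level for which the orders `m + α p - σ` (truncated at `0`) sum to at least `m` over the
points of `S` on a given curve.

Choose three curves with independent tangents at each `p`. A polynomial of degree at most `3N` for
which, at each `p`, every mixed derivative along these tangents with exponents below the three
orders vanishes must be zero (`dimension_count`): at a point where its order of vanishing minus `α`
is minimal, a suitable derivative vanishes to total order at least `m` along one of the curves,
hence identically, although its order at that point is known. As polynomials of degree at most `3N`
form a space of dimension at least `(N + 1) ^ 3`, the products of the three orders sum to at least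
`(N + 1) ^ 3`.

Put `w p = N(p) ^ (1/2)` and `W = ∑ w p`. By raising handicaps as long as possible
(`exists_handicap`) one reaches a state where, at every `p`, the product of the orders over every
independent triple exceeds `N ^ 3 * w p / W`, up to rounding. Expanding the cube of the sum of the
orders over the tangent lines at `p` (`mult_mul_le_sum_cube`) gives
`(∑ orders at p) ^ 3 ≥ N(p) * N ^ 3 * w p / W = (N * w p) ^ 3 / W`. Summing over `p`, and using
that the orders along each curve sum to at most `5bN`, yields `N * W ^ (2/3) ≤ 5bN * |Γ|`, which is
the claim for `S`. Since every joint has `w p ≥ 1`, finiteness of the set of joints follows.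
-/

/-- `T_x^Γ`: the set of one-dimensional subspaces of `ℝ³` of the form `span {γ'(t)}`
for some polynomially parametrised curve `γ ∈ Γ` and `t ∈ ℝ` with `γ(t) = x` and
`γ'(t) ≠ 0`. Curves are encoded by their coordinate polynomials `γ : Fin 3 → ℝ[t]`. -/
def tangentDirs (Γ : Finset (Fin 3 → Polynomial ℝ)) (x : Fin 3 → ℝ) :
    Set (Submodule ℝ (Fin 3 → ℝ)) :=
  {D | ∃ γ ∈ Γ, ∃ t : ℝ, (∀ i : Fin 3, (γ i).eval t = x i) ∧
    (fun i : Fin 3 => ((γ i).derivative.eval t)) ≠ 0 ∧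
    D = Submodule.span ℝ {fun i : Fin 3 => ((γ i).derivative.eval t)}}

/-- `x` is a joint for `Γ` if `T_x^Γ` contains three lines with linearly independent
direction vectors. -/
def IsCurveJoint (Γ : Finset (Fin 3 → Polynomial ℝ)) (x : Fin 3 → ℝ) : Prop :=
  ∃ D₁ ∈ tangentDirs Γ x, ∃ D₂ ∈ tangentDirs Γ x, ∃ D₃ ∈ tangentDirs Γ x,
    ∃ v₁ v₂ v₃ : Fin 3 → ℝ, v₁ ∈ D₁ ∧ v₂ ∈ D₂ ∧ v₃ ∈ D₃ ∧
      LinearIndependent ℝ ![v₁, v₂, v₃]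

open scoped Classical in
/-- `N(x)`: the number of unordered triples of elements of `T_x^Γ` whose direction
vectors are linearly independent. -/
noncomputable def curveJointMult (Γ : Finset (Fin 3 → Polynomial ℝ)) (x : Fin 3 → ℝ) : ℕ :=
  {T : Finset (Submodule ℝ (Fin 3 → ℝ)) |
    ∃ D₁ ∈ tangentDirs Γ x, ∃ D₂ ∈ tangentDirs Γ x, ∃ D₃ ∈ tangentDirs Γ x,
      T = {D₁, D₂, D₃} ∧ ∃ v₁ v₂ v₃ : Fin 3 → ℝ, v₁ ∈ D₁ ∧ v₂ ∈ D₂ ∧ v₃ ∈ D₃ ∧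
        LinearIndependent ℝ ![v₁, v₂, v₃]}.ncard

/-! ### Vanishing order and directional derivatives of polynomials in three variables -/

/-- `VanishesTo p r g`: all partial derivatives of `g` of order less than `r` vanish at `p`,
defined by recursion on `r`. -/
def VanishesTo (p : Fin 3 → ℝ) : ℕ → MvPolynomial (Fin 3) ℝ → Prop
  | 0, _ => True
  | r + 1, g => MvPolynomial.eval p g = 0 ∧ ∀ i, VanishesTo p r (MvPolynomial.pderiv i g)

/-- The derivative `g ↦ ∑ i, v i • ∂ᵢ g` in the direction `v`, as a linear operator. -/
noncomputable def dirDeriv (v : Fin 3 → ℝ) : Module.End ℝ (MvPolynomial (Fin 3) ℝ) :=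
  ∑ i, v i • ((MvPolynomial.pderiv (R := ℝ) i) : MvPolynomial (Fin 3) ℝ →ₗ[ℝ] MvPolynomial (Fin 3) ℝ)

lemma dirDeriv_apply (v : Fin 3 → ℝ) (g : MvPolynomial (Fin 3) ℝ) :
    dirDeriv v g = ∑ i, v i • MvPolynomial.pderiv i g := by
  simp [dirDeriv]

lemma pderiv_commute (i j : Fin 3) (g : MvPolynomial (Fin 3) ℝ) :
    MvPolynomial.pderiv i (MvPolynomial.pderiv j g) =
      MvPolynomial.pderiv j (MvPolynomial.pderiv i g) := by
  ext m
  simp only [MvPolynomial.coeff_pderiv]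
  by_cases h : i = j
  · subst h; rfl
  · have h' : j ≠ i := fun e => h e.symm
    simp [h, h', add_right_comm]
    ring

lemma dirDeriv_commute (v w : Fin 3 → ℝ) : Commute (dirDeriv v) (dirDeriv w) := by
  refine LinearMap.ext fun g => ?_
  simp only [Module.End.mul_apply, dirDeriv_apply, map_sum, map_smul, Finset.smul_sum]
  rw [Finset.sum_comm]
  refine Finset.sum_congr rfl fun i _ => Finset.sum_congr rfl fun j _ => ?_
  rw [pderiv_commute, smul_comm]

lemma VanishesTo.zero_poly (p : Fin 3 → ℝ) (r : ℕ) : VanishesTo p r 0 := by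
  induction r with
  | zero => trivial
  | succ r ih => exact ⟨by simp, fun i => by simpa using ih⟩

lemma VanishesTo.add {p : Fin 3 → ℝ} {r : ℕ} {g h : MvPolynomial (Fin 3) ℝ}
    (hg : VanishesTo p r g) (hh : VanishesTo p r h) : VanishesTo p r (g + h) := by
  induction r generalizing g h with
  | zero => trivial
  | succ r ih =>
    refine ⟨by simp [hg.1, hh.1], fun i => ?_⟩
    rw [map_add]
    exact ih (hg.2 i) (hh.2 i)

lemma VanishesTo.smul {p : Fin 3 → ℝ} {r : ℕ} {g : MvPolynomial (Fin 3) ℝ}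
    (hg : VanishesTo p r g) (c : ℝ) : VanishesTo p r (c • g) := by
  induction r generalizing g with
  | zero => trivial
  | succ r ih =>
    refine ⟨by simp [MvPolynomial.smul_eval, hg.1], fun i => ?_⟩
    rw [Derivation.map_smul]
    exact ih (hg.2 i)

lemma VanishesTo.sum {p : Fin 3 → ℝ} {r : ℕ} {ι : Type*} (s : Finset ι)
    {g : ι → MvPolynomial (Fin 3) ℝ} (hg : ∀ i ∈ s, VanishesTo p r (g i)) :
    VanishesTo p r (∑ i ∈ s, g i) :=
  Finset.sum_induction g (VanishesTo p r) (fun _ _ => VanishesTo.add) (VanishesTo.zero_poly p r) hg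

lemma VanishesTo.pred {p : Fin 3 → ℝ} {r : ℕ} {g : MvPolynomial (Fin 3) ℝ}
    (hg : VanishesTo p (r + 1) g) : VanishesTo p r g := by
  induction r generalizing g with
  | zero => trivial
  | succ r ih => exact ⟨hg.1, fun i => ih (hg.2 i)⟩

lemma VanishesTo.mono {p : Fin 3 → ℝ} {r s : ℕ} {g : MvPolynomial (Fin 3) ℝ}
    (hg : VanishesTo p r g) (h : s ≤ r) : VanishesTo p s g := by
  induction h with
  | refl => exact hg
  | step _ ih => exact ih hg.pred

lemma VanishesTo.dirDeriv {p : Fin 3 → ℝ} {r : ℕ} {g : MvPolynomial (Fin 3) ℝ}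
    (hg : VanishesTo p r g) (v : Fin 3 → ℝ) : VanishesTo p (r - 1) (dirDeriv v g) := by
  cases r with
  | zero => trivial
  | succ r =>
    rw [dirDeriv_apply]
    exact VanishesTo.sum _ fun i _ => (hg.2 i).smul _

lemma VanishesTo.dirDeriv_pow {p : Fin 3 → ℝ} {r : ℕ} {g : MvPolynomial (Fin 3) ℝ}
    (hg : VanishesTo p r g) (v : Fin 3 → ℝ) (k : ℕ) :
    VanishesTo p (r - k) ((_root_.dirDeriv v ^ k) g) := by
  induction k with
  | zero => simpa using hg
  | succ k ih =>
    rw [pow_succ', Module.End.mul_apply]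
    exact ih.dirDeriv v

lemma totalDegree_pderiv_le_s14 (i : Fin 3) (g : MvPolynomial (Fin 3) ℝ) :
    (MvPolynomial.pderiv i g).totalDegree ≤ g.totalDegree := by
  refine Finset.sup_le fun m hm => ?_
  rw [MvPolynomial.mem_support_iff, MvPolynomial.coeff_pderiv] at hm
  refine le_trans ?_ (MvPolynomial.le_totalDegree
    (MvPolynomial.mem_support_iff.2 (left_ne_zero_of_mul hm)))
  rw [Finsupp.sum_add_index' (fun _ => rfl) fun _ _ _ => rfl]
  exact Nat.le_add_right _ _

lemma totalDegree_dirDeriv_le (v : Fin 3 → ℝ) (g : MvPolynomial (Fin 3) ℝ) :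
    (dirDeriv v g).totalDegree ≤ g.totalDegree := by
  rw [dirDeriv_apply]
  refine MvPolynomial.totalDegree_finsetSum_le fun i _ => ?_
  exact (MvPolynomial.totalDegree_smul_le _ _).trans (totalDegree_pderiv_le_s14 i g)

lemma totalDegree_dirDeriv_pow_le (v : Fin 3 → ℝ) (k : ℕ) (g : MvPolynomial (Fin 3) ℝ) :
    ((dirDeriv v ^ k) g).totalDegree ≤ g.totalDegree := by
  induction k with
  | zero => simp
  | succ k ih =>
    rw [pow_succ', Module.End.mul_apply]
    exact (totalDegree_dirDeriv_le _ _).trans ih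

/-- The iterated derivative `D₀ ^ a₀ D₁ ^ a₁ D₂ ^ a₂`, where `Dᵢ` is the derivative in the
direction `v i`. -/
noncomputable def multiDeriv (v : Fin 3 → Fin 3 → ℝ) (a : Fin 3 → ℕ) :
    Module.End ℝ (MvPolynomial (Fin 3) ℝ) :=
  dirDeriv (v 0) ^ a 0 * (dirDeriv (v 1) ^ a 1 * dirDeriv (v 2) ^ a 2)

lemma multiDeriv_mul_dirDeriv (v : Fin 3 → Fin 3 → ℝ) (a : Fin 3 → ℕ) (j : Fin 3) :
    multiDeriv v a * dirDeriv (v j) = multiDeriv v (a + Pi.single j 1) := by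
  have h10 := (dirDeriv_commute (v 1) (v 0)).pow_left (a 1)
  have h20 := (dirDeriv_commute (v 2) (v 0)).pow_left (a 2)
  have h21 := (dirDeriv_commute (v 2) (v 1)).pow_left (a 2)
  fin_cases j
  · simp only [multiDeriv, Fin.zero_eta, Fin.isValue, Pi.add_apply, Pi.single_eq_same]
    simp only [Fin.isValue, ne_eq, Fin.reduceEq, not_false_eq_true, Pi.single_eq_of_ne, add_zero,
      pow_succ]
    rw [mul_assoc, mul_assoc, h20.eq, ← mul_assoc (_ ^ a 1), h10.eq]
    simp only [mul_assoc]
  · simp only [multiDeriv, Fin.mk_one, Fin.isValue, Pi.add_apply, Pi.single_eq_same]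
    simp only [Fin.isValue, ne_eq, Fin.reduceEq, not_false_eq_true, Pi.single_eq_of_ne, add_zero,
      pow_succ, zero_ne_one]
    rw [mul_assoc, mul_assoc, h21.eq]
    simp only [mul_assoc]
  · simp only [multiDeriv, Fin.reduceFinMk, Fin.isValue, Pi.add_apply, Pi.single_eq_same]
    simp only [Fin.isValue, ne_eq, Fin.reduceEq, not_false_eq_true, Pi.single_eq_of_ne, add_zero,
      pow_succ]
    simp only [mul_assoc]

/-- Any one of the three directions can be differentiated last: the remaining derivatives form an
operator `E` of order `s`. -/
lemma multiDeriv_split (v : Fin 3 → Fin 3 → ℝ) (a : Fin 3 → ℕ) (i : Fin 3) :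
    ∃ (E : Module.End ℝ (MvPolynomial (Fin 3) ℝ)) (s : ℕ),
      multiDeriv v a = dirDeriv (v i) ^ a i * E ∧ a i + s = ∑ j, a j ∧
      (∀ p r g, VanishesTo p r g → VanishesTo p (r - s) (E g)) ∧
      ∀ g, (E g).totalDegree ≤ g.totalDegree := by
  have key : ∀ k l : Fin 3,
      (∀ p r g, VanishesTo p r g →
        VanishesTo p (r - (a l + a k)) ((dirDeriv (v k) ^ a k * dirDeriv (v l) ^ a l) g)) ∧
      ∀ g, ((dirDeriv (v k) ^ a k * dirDeriv (v l) ^ a l) g).totalDegree ≤ g.totalDegree := by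
    intro k l
    refine ⟨fun p r g hg => ?_, fun g => ?_⟩
    · rw [Module.End.mul_apply, ← Nat.sub_sub]
      exact (hg.dirDeriv_pow _ _).dirDeriv_pow _ _
    · exact (totalDegree_dirDeriv_pow_le _ _ _).trans (totalDegree_dirDeriv_pow_le _ _ _)
  have h01 := (dirDeriv_commute (v 0) (v 1)).pow_pow (a 0) (a 1)
  have h02 := (dirDeriv_commute (v 0) (v 2)).pow_pow (a 0) (a 2)
  have h12 := (dirDeriv_commute (v 1) (v 2)).pow_pow (a 1) (a 2)
  fin_cases i
  · exact ⟨_, _, rfl, by simp [Fin.sum_univ_three]; ring, (key 1 2).1, (key 1 2).2⟩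
  · refine ⟨_, _, ?_, by simp [Fin.sum_univ_three]; ring, (key 0 2).1, (key 0 2).2⟩
    simp only [multiDeriv, Fin.mk_one]
    rw [← mul_assoc, h01.eq, mul_assoc]
  · refine ⟨_, _, ?_, by simp [Fin.sum_univ_three]; ring, (key 0 1).1, (key 0 1).2⟩
    simp only [multiDeriv, Fin.reduceFinMk]
    rw [h12.eq, ← mul_assoc, h02.eq, mul_assoc]

/-- In a basis `v`, the derivatives of order exactly `r` along `v` decide whether a polynomial
vanishing to order `r` vanishes to order `r + 1`. -/
lemma vanishesTo_succ_of_multiDeriv (v : Fin 3 → Fin 3 → ℝ) (c : Fin 3 → Fin 3 → ℝ)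
    (hv : ∀ i, Pi.single i 1 = ∑ j, c i j • v j) (p : Fin 3 → ℝ) (r : ℕ)
    (g : MvPolynomial (Fin 3) ℝ) (hg : VanishesTo p r g)
    (h : ∀ a : Fin 3 → ℕ, ∑ j, a j = r → MvPolynomial.eval p (multiDeriv v a g) = 0) :
    VanishesTo p (r + 1) g := by
  induction r generalizing g with
  | zero =>
    exact ⟨by simpa [multiDeriv] using h 0 (by simp), fun _ => trivial⟩
  | succ r ih =>
    refine ⟨hg.1, fun i => ?_⟩
    have e : MvPolynomial.pderiv i g = ∑ j, c i j • dirDeriv (v j) g := by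
      have h1 : MvPolynomial.pderiv i g = dirDeriv (Pi.single i 1) g := by
        rw [dirDeriv_apply, Finset.sum_eq_single i] <;> simp +contextual
      rw [h1, hv i]
      simp only [dirDeriv_apply, Finset.smul_sum]
      rw [Finset.sum_comm]
      refine Finset.sum_congr rfl fun k _ => ?_
      simp [Finset.sum_apply, Finset.sum_smul, smul_smul]
    rw [e]
    refine VanishesTo.sum _ fun j _ => VanishesTo.smul (ih _ ?_ ?_) _
    · exact hg.dirDeriv (v j)
    · intro a ha
      rw [← Module.End.mul_apply, multiDeriv_mul_dirDeriv]
      refine h _ ?_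
      simp [Finset.sum_add_distrib, ha]

/-! ### Restriction to a polynomial curve -/

/-- The point of the curve `γ` with parameter `t`. -/
noncomputable def curvePt (γ : Fin 3 → Polynomial ℝ) (t : ℝ) : Fin 3 → ℝ := fun i => (γ i).eval t

/-- The velocity of the curve `γ` at the parameter `t`. -/
noncomputable def curveVel (γ : Fin 3 → Polynomial ℝ) (t : ℝ) : Fin 3 → ℝ :=
  fun i => (γ i).derivative.eval t

lemma eval_aeval_curve (γ : Fin 3 → Polynomial ℝ) (t : ℝ) (g : MvPolynomial (Fin 3) ℝ) :
    (MvPolynomial.aeval γ g).eval t = MvPolynomial.eval (curvePt γ t) g := by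
  induction g using MvPolynomial.induction_on with
  | C a => simp [Polynomial.algebraMap_eq]
  | add p q hp hq => simp [hp, hq]
  | mul_X p i hp => simp [hp, curvePt]

lemma derivative_aeval_curve (γ : Fin 3 → Polynomial ℝ) (g : MvPolynomial (Fin 3) ℝ) :
    (MvPolynomial.aeval γ g).derivative =
      ∑ i, MvPolynomial.aeval γ (MvPolynomial.pderiv i g) * (γ i).derivative := by
  induction g using MvPolynomial.induction_on with
  | C a => simp [Polynomial.algebraMap_eq]
  | add p q hp hq => simp [hp, hq, add_mul, Finset.sum_add_distrib]
  | mul_X p i hp =>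
    have h1 : ∀ j, MvPolynomial.aeval γ (MvPolynomial.pderiv j (p * MvPolynomial.X i)) *
        (γ j).derivative = MvPolynomial.aeval γ (MvPolynomial.pderiv j p) * (γ j).derivative * γ i +
          if i = j then MvPolynomial.aeval γ p * (γ i).derivative else 0 := by
      intro j
      rw [MvPolynomial.pderiv_mul, map_add, map_mul, MvPolynomial.aeval_X, MvPolynomial.pderiv_X,
        map_mul]
      by_cases h : i = j
      · subst h
        rw [Pi.single_eq_same, map_one, if_pos rfl]
        ring
      · rw [Pi.single_eq_of_ne h, map_zero, if_neg h]
        ring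
    rw [Finset.sum_congr rfl fun j _ => h1 j, Finset.sum_add_distrib, Finset.sum_ite_eq,
      if_pos (Finset.mem_univ _), map_mul, MvPolynomial.aeval_X, Polynomial.derivative_mul, hp,
      Finset.sum_mul]

lemma dvd_of_dvd_derivative (t : ℝ) (r : ℕ) (h : Polynomial ℝ) (h0 : h.eval t = 0)
    (hd : (Polynomial.X - Polynomial.C t) ^ r ∣ h.derivative) :
    (Polynomial.X - Polynomial.C t) ^ (r + 1) ∣ h := by
  by_cases hz : h = 0
  · simp [hz]
  have hd0 : h.derivative ≠ 0 := by
    intro e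
    have h1 := Polynomial.eq_C_of_derivative_eq_zero e
    rw [h1] at h0 hz
    simp at h0
    simp [h0] at hz
  have hr : h.IsRoot t := h0
  rw [← Polynomial.le_rootMultiplicity_iff hz]
  rw [← Polynomial.le_rootMultiplicity_iff hd0, Polynomial.derivative_rootMultiplicity_of_root hr]
    at hd
  have := (Polynomial.rootMultiplicity_pos hz).2 hr
  omega

lemma VanishesTo.dvd_aeval {γ : Fin 3 → Polynomial ℝ} {t : ℝ} {r : ℕ}
    {g : MvPolynomial (Fin 3) ℝ} (hg : VanishesTo (curvePt γ t) r g) :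
    (Polynomial.X - Polynomial.C t) ^ r ∣ MvPolynomial.aeval γ g := by
  induction r generalizing g with
  | zero => simp
  | succ r ih =>
    refine dvd_of_dvd_derivative t r _ ?_ ?_
    · rw [eval_aeval_curve, hg.1]
    · rw [derivative_aeval_curve]
      exact Finset.dvd_sum fun i _ => Dvd.dvd.mul_right (ih (hg.2 i)) _

/-- If `g` vanishes to order `r` at a point of `γ` and its restriction to `γ` vanishes to order
`r + 1` there, then the `r`-th derivative of `g` along the tangent direction is zero. -/
lemma eval_dirDeriv_pow_eq_zero {γ : Fin 3 → Polynomial ℝ} {t : ℝ} {r : ℕ}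
    {g : MvPolynomial (Fin 3) ℝ} (hg : VanishesTo (curvePt γ t) r g)
    (hd : (Polynomial.X - Polynomial.C t) ^ (r + 1) ∣ MvPolynomial.aeval γ g) :
    MvPolynomial.eval (curvePt γ t) ((dirDeriv (curveVel γ t) ^ r) g) = 0 := by
  induction r generalizing g with
  | zero =>
    rw [zero_add, pow_one, Polynomial.dvd_iff_isRoot, Polynomial.IsRoot, eval_aeval_curve] at hd
    simpa using hd
  | succ r ih =>
    rw [pow_succ, Module.End.mul_apply]
    refine ih (hg.dirDeriv _) ?_
    have h1 := Polynomial.pow_sub_one_dvd_derivative_of_pow_dvd hd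
    rw [Nat.add_sub_cancel, derivative_aeval_curve] at h1
    -- Freezing the velocity at `t` changes the chain rule by a multiple of `X - t` in each summand.
    have h2 : ∑ i, MvPolynomial.aeval γ (MvPolynomial.pderiv i g) * (γ i).derivative =
        MvPolynomial.aeval γ (dirDeriv (curveVel γ t) g) +
        ∑ i, MvPolynomial.aeval γ (MvPolynomial.pderiv i g) *
          ((γ i).derivative - Polynomial.C ((γ i).derivative.eval t)) := by
      rw [dirDeriv_apply, map_sum, ← Finset.sum_add_distrib]
      refine Finset.sum_congr rfl fun i _ => ?_
      rw [map_smul, Polynomial.smul_eq_C_mul, curveVel]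
      ring
    rw [h2] at h1
    refine (dvd_add_left (Finset.dvd_sum fun i _ => ?_)).1 h1
    rw [pow_succ]
    exact mul_dvd_mul (hg.2 i).dvd_aeval Polynomial.X_sub_C_dvd_sub_C_eval

/-- A nonzero polynomial of degree at most `d` vanishes to order at most `d` at every point. -/
lemma not_vanishesTo_of_totalDegree_le {p : Fin 3 → ℝ} {d : ℕ} {g : MvPolynomial (Fin 3) ℝ}
    (hg : g ≠ 0) (hd : g.totalDegree ≤ d) : ¬ VanishesTo p (d + 1) g := by
  intro hV
  apply hg
  refine MvPolynomial.funext fun x => ?_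
  -- Restrict to the line from `p` to `x`.
  let γ : Fin 3 → Polynomial ℝ :=
    fun i => Polynomial.C (p i) + Polynomial.C (x i - p i) * Polynomial.X
  have hp : curvePt γ 0 = p := by funext i; simp [γ, curvePt]
  have hx : curvePt γ 1 = x := by funext i; simp [γ, curvePt]
  rw [← hp] at hV
  have hdeg : (MvPolynomial.aeval γ g).natDegree ≤ d * 1 :=
    MvPolynomial.aeval_natDegree_le g hd γ fun i => by simp only [γ]; compute_degree
  have h0 : MvPolynomial.aeval γ g = 0 := by
    refine Polynomial.eq_zero_of_dvd_of_natDegree_lt hV.dvd_aeval ?_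
    rw [Polynomial.natDegree_pow, Polynomial.natDegree_X_sub_C]
    omega
  rw [← hx, ← eval_aeval_curve, h0]
  simp

/-! ### The dimension count -/

/-- A linear system of fewer than `(N + 1) ^ 3` equations has a nonzero polynomial solution of
total degree at most `3 N`. -/
lemma exists_poly_of_card_lt (N : ℕ) {ι : Type*} [Fintype ι] (hι : Fintype.card ι < (N + 1) ^ 3)
    (φ : ι → MvPolynomial (Fin 3) ℝ →ₗ[ℝ] ℝ) :
    ∃ g : MvPolynomial (Fin 3) ℝ, g ≠ 0 ∧ g.totalDegree ≤ 3 * N ∧ ∀ i, φ i g = 0 := by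
  let e : (Fin 3 → Fin (N + 1)) → (Fin 3 →₀ ℕ) :=
    fun a => Finsupp.equivFunOnFinite.symm fun j => (a j : ℕ)
  have he : Function.Injective e := by
    intro a b h
    have h' := Finsupp.equivFunOnFinite.symm.injective h
    funext j
    exact Fin.ext (congrFun h' j)
  let Ψ : ((Fin 3 → Fin (N + 1)) → ℝ) →ₗ[ℝ] MvPolynomial (Fin 3) ℝ :=
    ∑ a, (MvPolynomial.monomial (R := ℝ) (e a)).comp (LinearMap.proj a)
  have hΨ : ∀ c, Ψ c = ∑ a, MvPolynomial.monomial (e a) (c a) := by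
    intro c; simp [Ψ]
  have hker := LinearMap.ker_ne_bot_of_finrank_lt (f := (LinearMap.pi φ).comp Ψ) (by
    simpa using hι)
  obtain ⟨c, hc, hc0⟩ := (Submodule.ne_bot_iff _).1 hker
  refine ⟨Ψ c, ?_, ?_, fun i => ?_⟩
  · intro h0
    apply hc0
    funext a
    have h1 := congrArg (MvPolynomial.coeff (e a)) h0
    rw [hΨ, MvPolynomial.coeff_sum, Finset.sum_eq_single a] at h1
    · simpa using h1
    · intro b _ hb
      rw [MvPolynomial.coeff_monomial, if_neg fun h => hb (he h)]
    · simp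
  · rw [hΨ]
    refine MvPolynomial.totalDegree_finsetSum_le fun a _ => ?_
    refine (MvPolynomial.totalDegree_monomial_le _ _).trans ?_
    rw [Finsupp.sum_fintype _ _ fun _ => rfl]
    simp only [e, Finsupp.equivFunOnFinite_symm_apply_apply, Fin.sum_univ_three, id]
    have h0 := (a 0).is_le
    have h1 := (a 1).is_le
    have h2 := (a 2).is_le
    omega
  · exact congrFun (LinearMap.mem_ker.1 hc) i

/-- Let `α` assign handicaps to the points of `U`, and pick at each `p ∈ U` three curves through
`p` with independent velocities. If on each of these curves the orders `m + α q - σ`, where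
`m = 3bN + 1` exceeds the degree of a restriction, sum to at least `m`, then the boxes of
derivatives with these side lengths contain at least `(N + 1) ^ 3` conditions in total. Otherwise
some nonzero `g` of degree at most `3N` satisfies all the conditions; at a point `p` where the
order of vanishing minus the handicap is least, some derivative of `g` vanishes to such high order
on one of the curves that it is identically zero there, although its order at `p` is known. -/
lemma dimension_count (b N : ℕ) (U : Finset (Fin 3 → ℝ)) (hU : U.Nonempty)
    (α : (Fin 3 → ℝ) → ℕ) (γ : (Fin 3 → ℝ) → Fin 3 → Fin 3 → Polynomial ℝ)
    (t : (Fin 3 → ℝ) → Fin 3 → ℝ) (σ : (Fin 3 → ℝ) → Fin 3 → ℕ)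
    (hdeg : ∀ p ∈ U, ∀ i j, (γ p i j).natDegree ≤ b)
    (hpt : ∀ p ∈ U, ∀ i, curvePt (γ p i) (t p i) = p)
    (hspan : ∀ p ∈ U, ∃ c : Fin 3 → Fin 3 → ℝ,
      ∀ i, Pi.single i 1 = ∑ j, c i j • curveVel (γ p j) (t p j))
    (R : (Fin 3 → ℝ) → Fin 3 → Finset ℝ)
    (hR : ∀ p ∈ U, ∀ i, ∀ s ∈ R p i, curvePt (γ p i) s ∈ U)
    (hsum : ∀ p ∈ U, ∀ i, 3 * b * N + 1 ≤
      ∑ s ∈ R p i, (3 * b * N + 1 + α (curvePt (γ p i) s) - σ p i)) :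
    (N + 1) ^ 3 ≤ ∑ p ∈ U, ∏ i, (3 * b * N + 1 + α p - σ p i) := by
  classical
  by_contra! hlt
  let B : (Fin 3 → ℝ) → Fin 3 → ℕ := fun p i => 3 * b * N + 1 + α p - σ p i
  let vel : (Fin 3 → ℝ) → Fin 3 → Fin 3 → ℝ := fun p i => curveVel (γ p i) (t p i)
  obtain ⟨g, hg0, hgd, hg⟩ := exists_poly_of_card_lt N
    (ι := Σ p : U, ∀ i : Fin 3, Fin (B p i))
    (by
      rw [Fintype.card_sigma]
      simp only [Fintype.card_pi, Fintype.card_fin]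
      rw [Finset.sum_coe_sort U fun p => ∏ i, B p i]
      exact hlt)
    (fun x => (MvPolynomial.aeval (R := ℝ) (x.1 : Fin 3 → ℝ)).toLinearMap.comp
      (multiDeriv (vel x.1) fun i => x.2 i))
  have hcond : ∀ p ∈ U, ∀ a : Fin 3 → ℕ, (∀ i, a i < B p i) →
      MvPolynomial.eval p (multiDeriv (vel p) a g) = 0 := by
    intro p hp a ha
    have := hg ⟨⟨p, hp⟩, fun i => ⟨a i, ha i⟩⟩
    simpa [MvPolynomial.aeval_eq_eval] using this
  have hord : ∀ p : Fin 3 → ℝ, ∃ r, VanishesTo p r g ∧ ¬ VanishesTo p (r + 1) g := by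
    intro p
    by_contra! h
    have : ∀ r, VanishesTo p r g := fun r => by
      induction r with
      | zero => trivial
      | succ r ih => exact h r ih
    exact not_vanishesTo_of_totalDegree_le hg0 hgd (this _)
  choose ord hord1 hord2 using hord
  obtain ⟨p, hp, hmin⟩ := U.exists_min_image (fun p => (ord p : ℤ) - α p) hU
  obtain ⟨c, hc⟩ := hspan p hp
  obtain ⟨a, ha, hne⟩ : ∃ a : Fin 3 → ℕ, ∑ j, a j = ord p ∧
      MvPolynomial.eval p (multiDeriv (vel p) a g) ≠ 0 := by
    by_contra! h
    exact hord2 p (vanishesTo_succ_of_multiDeriv (vel p) c hc p _ g (hord1 p) h)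
  obtain ⟨i, hi⟩ : ∃ i, B p i ≤ a i := by
    by_contra! h
    exact hne (hcond p hp a h)
  obtain ⟨E, s, hE, hs, hEV, hEd⟩ := multiDeriv_split (vel p) a i
  have hzero : MvPolynomial.aeval (γ p i) (E g) = 0 := by
    have hdvd : ∏ u ∈ R p i, (Polynomial.X - Polynomial.C u) ^
        (3 * b * N + 1 + α (curvePt (γ p i) u) - σ p i) ∣ MvPolynomial.aeval (γ p i) (E g) := by
      refine Finset.prod_dvd_of_coprime (fun u _ w _ huw => ?_) fun u hu => ?_
      · exact (Polynomial.pairwise_coprime_X_sub_C Function.injective_id huw).pow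
      · refine VanishesTo.dvd_aeval ((hEV _ _ _ (hord1 _)).mono ?_)
        have h1 := hmin _ (hR p hp i u hu)
        simp only [B] at hi
        omega
    refine Polynomial.eq_zero_of_dvd_of_natDegree_lt hdvd ?_
    rw [Polynomial.natDegree_prod_of_monic _ _ fun u _ => (Polynomial.monic_X_sub_C u).pow _]
    simp only [Polynomial.natDegree_pow, Polynomial.natDegree_X_sub_C, mul_one]
    have h1 := MvPolynomial.aeval_natDegree_le (E g) ((hEd g).trans hgd) (γ p i) (hdeg p hp i)
    have h2 := hsum p hp i
    have h3 : 3 * N * b = 3 * b * N := by ring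
    omega
  apply hne
  rw [hE, Module.End.mul_apply]
  have hpt' := hpt p hp i
  have := eval_dirDeriv_pow_eq_zero (γ := γ p i) (t := t p i) (r := a i) (g := E g)
    (by rw [hpt']; exact (hEV _ _ _ (hord1 p)).mono (by omega)) (by rw [hzero]; exact dvd_zero _)
  rwa [hpt'] at this

/-! ### The choice of handicaps -/

lemma exists_level {ι : Type*} (m : ℕ) (hm : 1 ≤ m) (R : Finset ι) (hR : R.Nonempty) (α : ι → ℕ) :
    ∃ σ, m ≤ ∑ t ∈ R, (m + α t - σ) ∧ ∑ t ∈ R, (m + α t - (σ + 1)) < m := by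
  classical
  have hex : ∃ s, ∑ t ∈ R, (m + α t - s) < m := by
    refine ⟨m + ∑ t ∈ R, α t, ?_⟩
    rw [Finset.sum_eq_zero fun t ht => ?_]
    · omega
    · have := Finset.single_le_sum (f := α) (fun _ _ => Nat.zero_le _) ht
      omega
  have h0 : Nat.find hex ≠ 0 := by
    intro h
    have h1 := Nat.find_spec hex
    rw [h] at h1
    obtain ⟨t, ht⟩ := hR
    have := Finset.single_le_sum (f := fun t => m + α t - 0) (fun _ _ => Nat.zero_le _) ht
    omega
  refine ⟨Nat.find hex - 1, ?_, ?_⟩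
  · exact not_lt.1 (Nat.find_min hex (by omega))
  · rw [Nat.sub_add_cancel (by omega)]
    exact Nat.find_spec hex

lemma level_mono {ι : Type*} {m : ℕ} {R : Finset ι} {α α' : ι → ℕ} {σ σ' : ℕ}
    (hα : ∀ t ∈ R, α t ≤ α' t) (h : m ≤ ∑ t ∈ R, (m + α t - σ))
    (h' : ∑ t ∈ R, (m + α' t - (σ' + 1)) < m) : σ ≤ σ' := by
  by_contra! hlt
  have : ∑ t ∈ R, (m + α t - σ) ≤ ∑ t ∈ R, (m + α' t - (σ' + 1)) :=
    Finset.sum_le_sum fun t ht => by have := hα t ht; omega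
  omega

/-- Existence of good handicaps. `Tri p F` says that `F` is one of the admissible triples of
(curve, parameter) pairs at the point `p`. The hypothesis `hcore` is the outcome of the dimension
count: admissible triples whose products are at most `target` on all of a nonempty `U` do not
exist. The conclusion provides handicaps `α` and levels `σ` for which every admissible triple has,
up to rounding, a product exceeding `target`, while the orders along each curve sum to about `m`.

The handicaps are found by raising `α p` one by one as long as some triple at `p` stays within
`target p`; raising `α p` only lowers the products at other points. The process stops because by
`hcore` the values of `α` have no gap longer than `m`. -/
lemma exists_handicap {P κ τ : Type*} (m : ℕ) (hm : 1 ≤ m) (S : Finset P) (R : κ → Finset τ)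
    (pt : κ → τ → P) (hRS : ∀ k, ∀ s ∈ R k, pt k s ∈ S)
    (Tri : P → (Fin 3 → κ × τ) → Prop)
    (hTri : ∀ p F, Tri p F → ∀ i, (F i).2 ∈ R (F i).1 ∧ pt (F i).1 (F i).2 = p)
    (target : P → ℝ)
    (hcore : ∀ (U : Finset P), U ⊆ S → U.Nonempty → ∀ (α : P → ℕ) (σ : κ → ℕ)
      (F : P → Fin 3 → κ × τ) (R' : P → Fin 3 → Finset τ), (∀ p ∈ U, Tri p (F p)) →
      (∀ p ∈ U, ∀ i, ∀ s ∈ R' p i, pt (F p i).1 s ∈ U) →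
      (∀ p ∈ U, ∀ i, m ≤ ∑ s ∈ R' p i, (m + α (pt (F p i).1 s) - σ (F p i).1)) →
      ∃ p ∈ U, target p < ((∏ i, (m + α p - σ (F p i).1) : ℕ) : ℝ)) :
    ∃ (α : P → ℕ) (σ : κ → ℕ),
      (∀ k, (R k).Nonempty → ∑ s ∈ R k, (m + α (pt k s) - (σ k + 1)) < m) ∧
      ∀ p ∈ S, ∀ F, Tri p F → target p < ((∏ i, (m + α p - σ (F i).1 + 1) : ℕ) : ℝ) := by
  classical
  have hlev : ∀ (k : κ) (α : P → ℕ), ∃ σ, (R k).Nonempty →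
      m ≤ ∑ s ∈ R k, (m + α (pt k s) - σ) ∧ ∑ s ∈ R k, (m + α (pt k s) - (σ + 1)) < m := by
    intro k α
    by_cases h : (R k).Nonempty
    · obtain ⟨σ, hσ⟩ := exists_level m hm (R k) h fun s => α (pt k s)
      exact ⟨σ, fun _ => hσ⟩
    · exact ⟨0, fun h' => absurd h' h⟩
  choose σ hσ using hlev
  let A : Set (P → ℕ) := {α | ∀ p ∈ S, 0 < α p →
    ∃ F, Tri p F ∧ ((∏ i, (m + α p - σ (F i).1 α) : ℕ) : ℝ) ≤ target p}
  have hbound : ∀ α ∈ A, ∀ p ∈ S, α p ≤ S.card * m := by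
    intro α hα
    let U : ℕ → Finset P := fun i => S.filter fun p => i * m < α p
    have hsub : ∀ i, U (i + 1) ⊆ U i := by
      intro i p hp
      simp only [U, Finset.mem_filter] at hp ⊢
      exact ⟨hp.1, lt_of_le_of_lt (Nat.mul_le_mul_right m (Nat.le_succ i)) hp.2⟩
    have hgap : ∀ i, (U i).Nonempty → U (i + 1) ≠ U i := by
      intro i hne heq
      have hF : ∀ p, ∃ F, p ∈ U i →
          Tri p F ∧ ((∏ i, (m + α p - σ (F i).1 α) : ℕ) : ℝ) ≤ target p := by
        intro p
        by_cases hp : p ∈ U i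
        · have hp' := Finset.mem_filter.1 hp
          obtain ⟨F, hF⟩ := hα p hp'.1 (by omega)
          exact ⟨F, fun _ => hF⟩
        · by_cases hex : ∃ F : Fin 3 → κ × τ, True
          · exact ⟨hex.choose, fun h => absurd h hp⟩
          · obtain ⟨q, hq⟩ := hne
            have hq' := Finset.mem_filter.1 hq
            obtain ⟨F, hF⟩ := hα q hq'.1 (by omega)
            exact ⟨F, fun h => absurd h hp⟩
      choose F hF using hF
      obtain ⟨p, hp, hlt⟩ := hcore (U i) (Finset.filter_subset _ _) hne α (fun k => σ k α) F
        (fun p j => (R (F p j).1).filter fun s => pt (F p j).1 s ∈ U i)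
        (fun p hp => (hF p hp).1) (fun p hp j s hs => (Finset.mem_filter.1 hs).2) (by
          intro p hp j
          have h1 := hTri p _ (hF p hp).1 j
          have h2 := hσ (F p j).1 α ⟨_, h1.1⟩
          refine h2.1.trans (le_of_eq ?_)
          rw [Finset.sum_filter]
          refine Finset.sum_congr rfl fun s hs => ?_
          split_ifs with hsU
          · rfl
          · -- The level is at least `α p`, which exceeds the handicaps below the gap by `m`.
            have h3 := Finset.single_le_sum
              (f := fun s => m + α (pt (F p j).1 s) - (σ (F p j).1 α + 1))
              (fun _ _ => Nat.zero_le _) h1.1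
            simp only [h1.2] at h3
            have h4 : (i + 1) * m < α p := (Finset.mem_filter.1 (show p ∈ U (i + 1) by rw [heq]; exact hp)).2
            have h5 : ¬ i * m < α (pt (F p j).1 s) := fun h =>
              hsU (Finset.mem_filter.2 ⟨hRS _ s hs, h⟩)
            rw [add_mul, one_mul] at h4
            omega)
      exact absurd (hF p hp).2 (not_le.2 hlt)
    have hcard : ∀ i, (U i).card ≤ S.card - i := by
      intro i
      induction i with
      | zero => exact Finset.card_le_card (Finset.filter_subset _ _)
      | succ i ih =>
        rcases (U i).eq_empty_or_nonempty with h | h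
        · have : U (i + 1) = ∅ := Finset.subset_empty.1 (h ▸ hsub i)
          simp [this]
        · have := Finset.card_lt_card (Finset.ssubset_iff_subset_ne.2 ⟨hsub i, hgap i h⟩)
          omega
    intro p hp
    by_contra! hlt
    have h1 : p ∈ U S.card := Finset.mem_filter.2 ⟨hp, hlt⟩
    have h2 := hcard S.card
    rw [Nat.sub_self, Nat.le_zero, Finset.card_eq_zero] at h2
    simp [h2] at h1
  -- Take the handicaps of maximal total.
  obtain ⟨α, hα, hmax⟩ : ∃ α ∈ A, ∀ β ∈ A, ∑ p ∈ S, β p ≤ ∑ p ∈ S, α p := by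
    let T : Set ℕ := (fun α : P → ℕ => ∑ p ∈ S, α p) '' A
    have hT0 : T.Nonempty := ⟨_, 0, by intro p _ h; simp at h, rfl⟩
    have hTb : BddAbove T := by
      refine ⟨S.card * (S.card * m), ?_⟩
      rintro _ ⟨α, hα, rfl⟩
      simpa using Finset.sum_le_card_nsmul S α _ (hbound α hα)
    obtain ⟨α, hα, he⟩ := Nat.sSup_mem hT0 hTb
    refine ⟨α, hα, fun β hβ => ?_⟩
    simp only at he
    rw [he]
    exact le_csSup hTb ⟨β, hβ, rfl⟩
  refine ⟨α, fun k => σ k α, fun k hk => (hσ k α hk).2, ?_⟩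
  intro p hp F hF
  by_contra! hle
  let β : P → ℕ := Function.update α p (α p + 1)
  have hβp : β p = α p + 1 := Function.update_self ..
  have hβq : ∀ q, q ≠ p → β q = α q := fun q hq => Function.update_of_ne hq _ _
  have hαβ : ∀ q, α q ≤ β q := by
    intro q
    by_cases h : q = p
    · subst h; omega
    · rw [hβq q h]
  have hσβ : ∀ k, (R k).Nonempty → σ k α ≤ σ k β := fun k hk =>
    level_mono (fun s _ => hαβ _) (hσ k α hk).1 (hσ k β hk).2
  have hβA : β ∈ A := by
    intro q hq hpos
    by_cases h : q = p
    · subst h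
      refine ⟨F, hF, le_trans ?_ hle⟩
      refine Nat.cast_le.2 (Finset.prod_le_prod' fun i _ => ?_)
      have := hσβ (F i).1 ⟨_, (hTri _ F hF i).1⟩
      omega
    · rw [hβq q h] at hpos ⊢
      obtain ⟨G, hG, hGle⟩ := hα q hq hpos
      refine ⟨G, hG, le_trans ?_ hGle⟩
      refine Nat.cast_le.2 (Finset.prod_le_prod' fun i _ => ?_)
      have := hσβ (G i).1 ⟨_, (hTri q G hG i).1⟩
      omega
  have h1 := hmax β hβA
  have h2 : ∑ p ∈ S, α p < ∑ p ∈ S, β p :=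
    Finset.sum_lt_sum (fun q _ => hαβ q) ⟨p, hp, by omega⟩
  omega

/-! ### Joints -/

lemma linearIndependent_of_mem_span {v u : Fin 3 → Fin 3 → ℝ} (h : LinearIndependent ℝ v)
    (hm : ∀ i, v i ∈ Submodule.span ℝ {u i}) : LinearIndependent ℝ u := by
  choose c hc using fun i => Submodule.mem_span_singleton.1 (hm i)
  have hc0 : ∀ i, c i ≠ 0 := by
    intro i h0
    apply h.ne_zero i
    rw [← hc i, h0, zero_smul]
  have h1 := h.units_smul fun i => (Units.mk0 (c i) (hc0 i))⁻¹
  convert h1 using 1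
  funext i
  rw [Pi.smul_apply', ← hc i, Units.smul_def, smul_smul]
  simp [hc0 i]

lemma exists_coeff_of_linearIndependent {u : Fin 3 → Fin 3 → ℝ} (h : LinearIndependent ℝ u) :
    ∃ c : Fin 3 → Fin 3 → ℝ, ∀ i, Pi.single i 1 = ∑ j, c i j • u j := by
  have h1 := h.span_eq_top_of_card_eq_finrank (by simp)
  have h2 : ∀ i : Fin 3, ∃ c : Fin 3 → ℝ, ∑ j, c j • u j = Pi.single i 1 := fun i =>
    (Submodule.mem_span_range_iff_exists_fun ℝ).1 (h1 ▸ Submodule.mem_top)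
  choose c hc using h2
  exact ⟨c, fun i => (hc i).symm⟩

lemma exists_fiber (b : ℕ) (γ : Fin 3 → Polynomial ℝ)
    (hγ : (¬ ∀ i : Fin 3, (γ i).natDegree = 0) ∧ ∀ i : Fin 3, (γ i).natDegree ≤ b)
    (p : Fin 3 → ℝ) : ∃ Φ : Finset ℝ, Φ.card ≤ b ∧ ∀ t, t ∈ Φ ↔ curvePt γ t = p := by
  classical
  obtain ⟨i, hi⟩ := not_forall.1 hγ.1
  have hne : γ i - Polynomial.C (p i) ≠ 0 := by
    intro h
    rw [sub_eq_zero] at h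
    exact hi (by rw [h, Polynomial.natDegree_C])
  refine ⟨(γ i - Polynomial.C (p i)).roots.toFinset.filter fun t => curvePt γ t = p, ?_, ?_⟩
  · refine (Finset.card_filter_le _ _).trans ((Multiset.toFinset_card_le _).trans ?_)
    refine (Polynomial.card_roots' _).trans ?_
    rw [Polynomial.natDegree_sub_C]
    exact hγ.2 i
  · intro t
    simp only [Finset.mem_filter, Multiset.mem_toFinset, Polynomial.mem_roots hne, and_iff_right_iff_imp]
    rintro rfl
    simp [curvePt]

lemma tangentDirs_finite (b : ℕ) (Γ : Finset (Fin 3 → Polynomial ℝ))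
    (hΓ : ∀ γ ∈ Γ, (¬ ∀ i : Fin 3, (γ i).natDegree = 0) ∧ ∀ i : Fin 3, (γ i).natDegree ≤ b)
    (p : Fin 3 → ℝ) : (tangentDirs Γ p).Finite := by
  have hfib : ∀ γ ∈ Γ, {t | curvePt γ t = p}.Finite := by
    intro γ hγ
    obtain ⟨Φ, -, hΦ⟩ := exists_fiber b γ (hΓ γ hγ) p
    exact Φ.finite_toSet.subset fun t ht => (hΦ t).2 ht
  refine (Γ.finite_toSet.biUnion fun γ hγ =>
    (hfib γ hγ).image fun t => Submodule.span ℝ {curveVel γ t}).subset ?_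
  rintro D ⟨γ, hγ, t, ht, -, rfl⟩
  exact Set.mem_biUnion hγ ⟨t, funext ht, rfl⟩

/-- Ordered triples of tangent lines at `p` spanning `ℝ³`, as a finite set. -/
noncomputable def jointTriples (Γ : Finset (Fin 3 → Polynomial ℝ)) (p : Fin 3 → ℝ)
    (h : (tangentDirs Γ p).Finite) :
    Finset (Submodule ℝ (Fin 3 → ℝ) × Submodule ℝ (Fin 3 → ℝ) × Submodule ℝ (Fin 3 → ℝ)) :=
  open scoped Classical in
  (h.toFinset ×ˢ h.toFinset ×ˢ h.toFinset).filter fun D => ∃ v₁ v₂ v₃ : Fin 3 → ℝ,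
    v₁ ∈ D.1 ∧ v₂ ∈ D.2.1 ∧ v₃ ∈ D.2.2 ∧ LinearIndependent ℝ ![v₁, v₂, v₃]

lemma curveJointMult_le (Γ : Finset (Fin 3 → Polynomial ℝ)) (p : Fin 3 → ℝ)
    (h : (tangentDirs Γ p).Finite) : curveJointMult Γ p ≤ (jointTriples Γ p h).card ∧
      (IsCurveJoint Γ p → 1 ≤ curveJointMult Γ p) := by
  classical
  have hsub : {T : Finset (Submodule ℝ (Fin 3 → ℝ)) |
      ∃ D₁ ∈ tangentDirs Γ p, ∃ D₂ ∈ tangentDirs Γ p, ∃ D₃ ∈ tangentDirs Γ p,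
        T = {D₁, D₂, D₃} ∧ ∃ v₁ v₂ v₃ : Fin 3 → ℝ, v₁ ∈ D₁ ∧ v₂ ∈ D₂ ∧ v₃ ∈ D₃ ∧
          LinearIndependent ℝ ![v₁, v₂, v₃]} ⊆
      ((jointTriples Γ p h).image fun D => ({D.1, D.2.1, D.2.2} :
        Finset (Submodule ℝ (Fin 3 → ℝ))) : Finset (Finset (Submodule ℝ (Fin 3 → ℝ)))) := by
    rintro T ⟨D₁, h₁, D₂, h₂, D₃, h₃, rfl, hv⟩
    refine Finset.mem_coe.2 (Finset.mem_image.2 ⟨(D₁, D₂, D₃), ?_, rfl⟩)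
    simp only [jointTriples, Finset.mem_filter, Finset.mem_product, Set.Finite.mem_toFinset]
    exact ⟨⟨h₁, h₂, h₃⟩, hv⟩
  constructor
  · exact (Set.ncard_le_ncard hsub (Finset.finite_toSet _)).trans
      ((Set.ncard_coe_finset _).trans_le Finset.card_image_le)
  · rintro ⟨D₁, h₁, D₂, h₂, D₃, h₃, hv⟩
    exact (Set.ncard_pos ((Finset.finite_toSet _).subset hsub)).2
      ⟨_, D₁, h₁, D₂, h₂, D₃, h₃, rfl, hv⟩

/-- If `β` has product at least `τ` on every spanning triple, then
`N(p) τ ≤ (∑ β) ^ 3`, by expanding the cube. -/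
lemma mult_mul_le_sum_cube (Γ : Finset (Fin 3 → Polynomial ℝ)) (p : Fin 3 → ℝ)
    (h : (tangentDirs Γ p).Finite) (β : Submodule ℝ (Fin 3 → ℝ) → ℝ) (hβ : ∀ D, 0 ≤ β D) (τ : ℝ)
    (hτ0 : 0 ≤ τ) (hτ : ∀ D ∈ jointTriples Γ p h, τ ≤ β D.1 * β D.2.1 * β D.2.2) :
    (curveJointMult Γ p : ℝ) * τ ≤ (∑ D ∈ h.toFinset, β D) ^ 3 := by
  classical
  calc (curveJointMult Γ p : ℝ) * τ ≤ (jointTriples Γ p h).card * τ := by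
        have := (curveJointMult_le Γ p h).1
        gcongr
    _ = ∑ D ∈ jointTriples Γ p h, τ := by simp
    _ ≤ ∑ D ∈ jointTriples Γ p h, β D.1 * β D.2.1 * β D.2.2 := Finset.sum_le_sum hτ
    _ ≤ ∑ D ∈ h.toFinset ×ˢ h.toFinset ×ˢ h.toFinset, β D.1 * β D.2.1 * β D.2.2 :=
        Finset.sum_le_sum_of_subset_of_nonneg (Finset.filter_subset _ _) fun D _ _ =>
          mul_nonneg (mul_nonneg (hβ _) (hβ _)) (hβ _)
    _ = (∑ D ∈ h.toFinset, β D) ^ 3 := by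
        simp only [Finset.sum_product, ← Finset.mul_sum, ← Finset.sum_mul, mul_assoc]
        ring

/-- Suitable orders of vanishing for the points of `S` with weights `w`. A flag `(k, s)` with
`curvePt k s ∈ S` gets a positive order `B k s`; the orders along each curve sum to `O(N)`, while
at every `p ∈ S` the product of the orders over any three flags with independent velocities
exceeds `p`'s share of `N ^ 3`. -/
lemma exists_orders (b : ℕ) (Γ : Finset (Fin 3 → Polynomial ℝ))
    (hΓ : ∀ γ ∈ Γ, (¬ ∀ i : Fin 3, (γ i).natDegree = 0) ∧ ∀ i : Fin 3, (γ i).natDegree ≤ b)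
    (S : Finset (Fin 3 → ℝ)) (w : (Fin 3 → ℝ) → ℝ) (hw0 : ∀ x, 0 ≤ w x)
    (hW0 : 0 < ∑ x ∈ S, w x) :
    ∃ (N : ℕ) (R : Γ → Finset ℝ) (B : Γ → ℝ → ℕ), 0 < N ∧
      (∀ k s, s ∈ R k ↔ curvePt k.1 s ∈ S) ∧ (∀ k, ∑ s ∈ R k, B k s ≤ 5 * b * N) ∧
      ∀ p ∈ S, ∀ F : Fin 3 → Γ × ℝ, (∀ i, curvePt (F i).1.1 (F i).2 = p) →
        LinearIndependent ℝ (fun i => curveVel (F i).1.1 (F i).2) →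
        N ^ 3 * w p / (∑ x ∈ S, w x) < ((∏ i, B (F i).1 (F i).2 : ℕ) : ℝ) := by
  classical
  choose Φ hΦcard hΦ using fun (k : Γ) (p : Fin 3 → ℝ) => exists_fiber b k.1 (hΓ k.1 k.2) p
  obtain ⟨R, hR⟩ : ∃ R : Γ → Finset ℝ, ∀ k, R k = S.biUnion (Φ k) := ⟨_, fun _ => rfl⟩
  have hRmem : ∀ k s, s ∈ R k ↔ curvePt k.1 s ∈ S := by
    intro k s
    simp only [hR, Finset.mem_biUnion, hΦ]
    exact ⟨fun ⟨p, hp, h⟩ => h ▸ hp, fun h => ⟨_, h, rfl⟩⟩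
  have hRcard : ∀ k, (R k).card ≤ S.card * b := fun k =>
    hR k ▸ Finset.card_biUnion_le_card_mul _ _ _ fun p _ => hΦcard k p
  obtain ⟨N, hN⟩ : ∃ N, N = S.card + 1 := ⟨_, rfl⟩
  have hcore : ∀ (U : Finset (Fin 3 → ℝ)), U ⊆ S → U.Nonempty → ∀ (α : (Fin 3 → ℝ) → ℕ)
      (σ : Γ → ℕ) (F : (Fin 3 → ℝ) → Fin 3 → Γ × ℝ) (R' : (Fin 3 → ℝ) → Fin 3 → Finset ℝ),
      (∀ p ∈ U, p ∈ S ∧ (∀ i, curvePt (F p i).1.1 (F p i).2 = p) ∧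
        LinearIndependent ℝ fun i => curveVel (F p i).1.1 (F p i).2) →
      (∀ p ∈ U, ∀ i, ∀ s ∈ R' p i, curvePt (F p i).1.1 s ∈ U) →
      (∀ p ∈ U, ∀ i, 3 * b * N + 1 ≤
        ∑ s ∈ R' p i, (3 * b * N + 1 + α (curvePt (F p i).1.1 s) - σ (F p i).1)) →
      ∃ p ∈ U, N ^ 3 * w p / (∑ x ∈ S, w x) <
        ((∏ i, (3 * b * N + 1 + α p - σ (F p i).1) : ℕ) : ℝ) := by
    intro U hUS hU α σ F R' hTri hR' hsum
    by_contra! hle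
    have h1 := dimension_count b N U hU α (fun p i => (F p i).1.1) (fun p i => (F p i).2)
      (fun p i => σ (F p i).1) (fun p _ i j => (hΓ _ (F p i).1.2).2 j)
      (fun p hp i => (hTri p hp).2.1 i)
      (fun p hp => exists_coeff_of_linearIndependent (hTri p hp).2.2) R' hR' hsum
    have h2 : (((N + 1) ^ 3 : ℕ) : ℝ) ≤ N ^ 3 := by
      calc (((N + 1) ^ 3 : ℕ) : ℝ)
          ≤ ((∑ p ∈ U, ∏ i, (3 * b * N + 1 + α p - σ (F p i).1) : ℕ) : ℝ) := Nat.cast_le.2 h1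
        _ = ∑ p ∈ U, ((∏ i, (3 * b * N + 1 + α p - σ (F p i).1) : ℕ) : ℝ) := Nat.cast_sum _ _
        _ ≤ ∑ p ∈ U, N ^ 3 * w p / (∑ x ∈ S, w x) := Finset.sum_le_sum hle
        _ ≤ ∑ p ∈ S, N ^ 3 * w p / (∑ x ∈ S, w x) :=
            Finset.sum_le_sum_of_subset_of_nonneg hUS fun p _ _ =>
              div_nonneg (mul_nonneg (by positivity) (hw0 p)) hW0.le
        _ = N ^ 3 := by
            rw [← Finset.sum_div, ← Finset.mul_sum, mul_div_cancel_right₀ _ hW0.ne']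
    have h3 : (N + 1) ^ 3 ≤ N ^ 3 := by exact_mod_cast h2
    exact absurd h3 (not_le.2 (Nat.pow_lt_pow_left (Nat.lt_succ_self N) (by norm_num)))
  obtain ⟨α, σ, hσ, hprod⟩ := exists_handicap (3 * b * N + 1) (Nat.le_add_left _ _) S R
    (fun k s => curvePt k.1 s) (fun k s hs => (hRmem k s).1 hs)
    (fun p F => p ∈ S ∧ (∀ i, curvePt (F i).1.1 (F i).2 = p) ∧
      LinearIndependent ℝ fun i => curveVel (F i).1.1 (F i).2)
    (fun p F hF i => ⟨(hRmem _ _).2 (by rw [hF.2.1 i]; exact hF.1), hF.2.1 i⟩)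
    (fun p => N ^ 3 * w p / (∑ x ∈ S, w x)) hcore
  refine ⟨N, R, fun k s => 3 * b * N + 1 + α (curvePt k.1 s) - σ k + 1, by omega, hRmem, ?_, ?_⟩
  · intro k
    rcases (R k).eq_empty_or_nonempty with h | h
    · simp [h]
    · have h1 := hσ k h
      have h2 : ∑ s ∈ R k, (3 * b * N + 1 + α (curvePt k.1 s) - σ k + 1) ≤
          ∑ s ∈ R k, ((3 * b * N + 1 + α (curvePt k.1 s) - (σ k + 1)) + 2) :=
        Finset.sum_le_sum fun s _ => by omega
      have h3 := hRcard k
      have h4 : S.card * b ≤ b * N := by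
        rw [hN, mul_comm]
        exact Nat.mul_le_mul_left _ (Nat.le_succ _)
      have h5 : 5 * b * N = 3 * b * N + 2 * (b * N) := by ring
      refine h2.trans ?_
      rw [Finset.sum_add_distrib, Finset.sum_const, smul_eq_mul]
      omega
  · intro p hp F hF hLI
    have h1 := hprod p hp F ⟨hp, hF, hLI⟩
    simp only [hF]
    exact h1

/-- The bound for an arbitrary finite set `S` of points. -/
lemma sum_sqrt_mult_le (b : ℕ) (Γ : Finset (Fin 3 → Polynomial ℝ))
    (hΓ : ∀ γ ∈ Γ, (¬ ∀ i : Fin 3, (γ i).natDegree = 0) ∧ ∀ i : Fin 3, (γ i).natDegree ≤ b)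
    (S : Finset (Fin 3 → ℝ)) :
    ∑ x ∈ S, Real.sqrt (curveJointMult Γ x) ≤ (5 * b * Γ.card : ℝ) ^ (3 / 2 : ℝ) := by
  classical
  rcases Γ.eq_empty_or_nonempty with rfl | ⟨γ₀, hγ₀⟩
  · simp [curveJointMult, tangentDirs]
  obtain ⟨w, hw⟩ : ∃ w : (Fin 3 → ℝ) → ℝ, ∀ x, w x = Real.sqrt (curveJointMult Γ x) :=
    ⟨_, fun _ => rfl⟩
  have hw0 : ∀ x, 0 ≤ w x := fun x => hw x ▸ Real.sqrt_nonneg _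
  simp only [← hw]
  rcases (Finset.sum_nonneg fun x (_ : x ∈ S) => hw0 x).eq_or_lt with hW0 | hW0
  · rw [← hW0]; positivity
  obtain ⟨N, R, B, hN, hR, hRsum, hprod⟩ := exists_orders b Γ hΓ S w hw0 hW0
  have hNpos : (0 : ℝ) < N := Nat.cast_pos.2 hN
  obtain ⟨W, hW⟩ : ∃ W, W = ∑ x ∈ S, w x := ⟨_, rfl⟩
  rw [← hW] at hW0 hprod ⊢
  have hfin := tangentDirs_finite b Γ hΓ
  have hflag : ∀ p D, ∃ x : Γ × ℝ, D ∈ tangentDirs Γ p → curvePt x.1.1 x.2 = p ∧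
      D = Submodule.span ℝ {curveVel x.1.1 x.2} := by
    intro p D
    by_cases hD : D ∈ tangentDirs Γ p
    · obtain ⟨γ, hγ, t, ht, -, hD⟩ := hD
      exact ⟨(⟨γ, hγ⟩, t), fun _ => ⟨funext ht, hD⟩⟩
    · exact ⟨(⟨γ₀, hγ₀⟩, 0), fun h => absurd h hD⟩
  choose f hf using hflag
  have hy0 : 0 < W ^ (1 / 3 : ℝ) := Real.rpow_pos_of_pos hW0 _
  have hy3 : (W ^ (1 / 3 : ℝ)) ^ 3 = W := by
    rw [← Real.rpow_natCast, ← Real.rpow_mul hW0.le]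
    norm_num
  obtain ⟨y, hy⟩ : ∃ y, y = W ^ (1 / 3 : ℝ) := ⟨_, rfl⟩
  rw [← hy] at hy0 hy3
  have hloc : ∀ p ∈ S, N * w p / y ≤
      ∑ D ∈ (hfin p).toFinset, (B (f p D).1 (f p D).2 : ℝ) := by
    intro p hp
    have h1 := mult_mul_le_sum_cube Γ p (hfin p) (fun D => (B (f p D).1 (f p D).2 : ℝ))
      (fun _ => Nat.cast_nonneg _) (N ^ 3 * w p / W)
      (div_nonneg (mul_nonneg (by positivity) (hw0 p)) hW0.le) (by
        intro D hD
        simp only [jointTriples, Finset.mem_filter, Finset.mem_product,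
          Set.Finite.mem_toFinset] at hD
        obtain ⟨⟨hD₁, hD₂, hD₃⟩, v₁, v₂, v₃, hv₁, hv₂, hv₃, hLI⟩ := hD
        have h2 := hprod p hp ![f p D.1, f p D.2.1, f p D.2.2]
          (by
            intro i
            fin_cases i
            · exact (hf p _ hD₁).1
            · exact (hf p _ hD₂).1
            · exact (hf p _ hD₃).1)
          (by
            refine linearIndependent_of_mem_span hLI fun i => ?_
            fin_cases i
            · exact (hf p _ hD₁).2 ▸ hv₁
            · exact (hf p _ hD₂).2 ▸ hv₂
            · exact (hf p _ hD₃).2 ▸ hv₃)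
        rw [Fin.prod_univ_three] at h2
        push_cast at h2
        exact h2.le)
    have h2 : (curveJointMult Γ p : ℝ) = w p ^ 2 := by
      rw [hw, Real.sq_sqrt (Nat.cast_nonneg _)]
    refine le_of_pow_le_pow_left₀ (n := 3) (by norm_num)
      (Finset.sum_nonneg fun _ _ => Nat.cast_nonneg _) (le_trans (le_of_eq ?_) h1)
    rw [h2, div_pow, hy3]
    ring
  have hglob : ∑ p ∈ S, ∑ D ∈ (hfin p).toFinset, B (f p D).1 (f p D).2 ≤
      Γ.card * (5 * b * N) := by
    calc ∑ p ∈ S, ∑ D ∈ (hfin p).toFinset, B (f p D).1 (f p D).2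
        = ∑ x ∈ S.sigma fun p => (hfin p).toFinset,
            B (f x.1 x.2).1 (f x.1 x.2).2 := Finset.sum_sigma' ..
      _ = ∑ z ∈ (S.sigma fun p => (hfin p).toFinset).image (fun x => f x.1 x.2),
            B z.1 z.2 := by
          rw [Finset.sum_image]
          -- A flag determines its point and its tangent line.
          rintro ⟨p, D⟩ hx ⟨q, E⟩ hz h
          simp only [Finset.coe_sigma, Set.mem_sigma_iff, Finset.mem_coe,
            Set.Finite.mem_toFinset] at hx hz h
          have h1 := hf p D hx.2
          have h2 := hf q E hz.2
          rw [h] at h1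
          obtain rfl : p = q := h1.1.symm.trans h2.1
          obtain rfl : D = E := h1.2.trans h2.2.symm
          rfl
      _ ≤ ∑ z ∈ (Finset.univ.sigma R).image (fun x => (x.1, x.2)), B z.1 z.2 := by
          refine Finset.sum_le_sum_of_subset ?_
          intro z hz
          obtain ⟨⟨p, D⟩, hx, rfl⟩ := Finset.mem_image.1 hz
          simp only [Finset.mem_sigma, Set.Finite.mem_toFinset] at hx
          refine Finset.mem_image.2 ⟨⟨(f p D).1, (f p D).2⟩, ?_, rfl⟩
          simp only [Finset.mem_sigma, Finset.mem_univ, true_and, hR]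
          rw [(hf p D hx.2).1]
          exact hx.1
      _ = ∑ x ∈ Finset.univ.sigma R, B x.1 x.2 := by
          rw [Finset.sum_image]
          rintro ⟨k, s⟩ - ⟨l, u⟩ - h
          simp only [Prod.mk.injEq] at h
          obtain ⟨rfl, rfl⟩ := h
          rfl
      _ = ∑ k, ∑ s ∈ R k, B k s := Finset.sum_sigma ..
      _ ≤ ∑ _k : Γ, 5 * b * N := Finset.sum_le_sum fun k _ => hRsum k
      _ = Γ.card * (5 * b * N) := by simp
  have hmain : N * W / y ≤ Γ.card * (5 * b * N) := by
    calc N * W / y = ∑ p ∈ S, N * w p / y := by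
          rw [← Finset.sum_div, ← Finset.mul_sum, hW]
      _ ≤ ∑ p ∈ S, ∑ D ∈ (hfin p).toFinset, (B (f p D).1 (f p D).2 : ℝ) :=
          Finset.sum_le_sum hloc
      _ ≤ Γ.card * (5 * b * N) := by exact_mod_cast hglob
  have hy2 : y ^ 2 ≤ 5 * b * Γ.card := by
    have h1 : N * W / y = N * y ^ 2 := by
      rw [← hy3]
      field_simp
    rw [h1] at hmain
    refine le_of_mul_le_mul_left (hmain.trans (le_of_eq ?_)) hNpos
    ring
  calc W = (y ^ 2) ^ (3 / 2 : ℝ) := by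
        rw [← Real.rpow_natCast, ← Real.rpow_mul hy0.le, ← hy3, ← Real.rpow_natCast]
        norm_num
    _ ≤ (5 * b * Γ.card : ℝ) ^ (3 / 2 : ℝ) :=
        Real.rpow_le_rpow (by positivity) hy2 (by norm_num)


/-! ### The joints bound -/

/-- For every `b ≥ 1` there is `c_b > 0` such that for every finite collection `Γ` of
polynomially parametrised curves in `ℝ³` (coordinates not all constant, of degrees at
most `b`), the set `J` of joints of `Γ` is finite and
`∑_{x ∈ J} N(x)^{1/2} ≤ c_b · |Γ|^{3/2}`. -/
theorem joints_of_parametrised_curves (b : ℕ) (hb : 1 ≤ b) :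
    ∃ c : ℝ, 0 < c ∧ ∀ Γ : Finset (Fin 3 → Polynomial ℝ),
      (∀ γ ∈ Γ, (¬ ∀ i : Fin 3, (γ i).natDegree = 0) ∧
        ∀ i : Fin 3, (γ i).natDegree ≤ b) →
      ∃ hJ : {x : Fin 3 → ℝ | IsCurveJoint Γ x}.Finite,
        ∑ x ∈ hJ.toFinset, Real.sqrt (curveJointMult Γ x) ≤
          c * (Γ.card : ℝ) ^ (3 / 2 : ℝ) := by
  have hbpos : (0 : ℝ) < b := Nat.cast_pos.2 hb
  refine ⟨(5 * b : ℝ) ^ (3 / 2 : ℝ), by positivity, fun Γ hΓ => ?_⟩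
  have hS := fun S => sum_sqrt_mult_le b Γ hΓ S
  have hfin := tangentDirs_finite b Γ hΓ
  -- Each joint contributes at least `1`, so the bound for finite sets of joints limits their size.
  have hJ : {x : Fin 3 → ℝ | IsCurveJoint Γ x}.Finite := by
    by_contra hinf
    obtain ⟨n, hn⟩ := exists_nat_gt ((5 * b * Γ.card : ℝ) ^ (3 / 2 : ℝ))
    obtain ⟨S, hSJ, hScard⟩ := Set.Infinite.exists_subset_card_eq hinf n
    have h1 : (n : ℝ) ≤ ∑ x ∈ S, Real.sqrt (curveJointMult Γ x) := by
      calc (n : ℝ) = ∑ x ∈ S, (1 : ℝ) := by simp [hScard]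
        _ ≤ _ := Finset.sum_le_sum fun x hx => by
          rw [Real.one_le_sqrt]
          exact_mod_cast (curveJointMult_le Γ x (hfin x)).2 (hSJ hx)
    exact absurd (h1.trans (hS S)) (not_le.2 hn)
  refine ⟨hJ, ?_⟩
  rw [← Real.mul_rpow (by positivity) (by positivity)]
  exact hS hJ.toFinset
end

section
/- Let p ∈ ℝ[x,y] be a nonzero squarefree polynomial of total degree d ≥ 1. Then the set of points (a,b) ∈ ℝ² at which p, ∂p/∂x and ∂p/∂y all vanish is finite, of cardinality at most d². -/
open MvPolynomial

/-!
A singular point of `p` is a common zero of `p` and of every directional derivative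
`g = ∂p/∂x + t ∂p/∂y`, so it suffices to find `t` with `p` and `g` coprime and to apply a weak
form of Bézout's theorem.

* **A coprime directional derivative** (`exists_isRelPrime_directional`). If every `t ∈ ℕ` failed,
  then, `p` having finitely many irreducible factors, a single irreducible `q ∣ p` would divide the
  derivatives for two different `t`, hence both `∂p/∂x` and `∂p/∂y`. Writing `p = q r` with `q ∤ r`
  (as `p` is squarefree), `q` divides both of its own partial derivatives; these have smaller degree,
  so they vanish and `q` is constant, which is absurd.

* **Weak Bézout** (`card_common_zeros_le`). Let `f, g` be coprime of degrees `m, n`, let `S` be a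
  finite set of common zeros, of cardinality `e`, and let `V k` be the space of polynomials of degree
  at most `k`, so that `dim V k = (k + 1) (k + 2) / 2`. Evaluation `V (m + n + e) → ℝ^S` is
  surjective, and its kernel contains the image of
  `V (n + e) × V (m + e) → V (m + n + e)`, `(a, b) ↦ a f + b g`. By coprimality the kernel of the
  latter map consists of the pairs `(c g, -c f)` with `c ∈ V e`. Hence
  `e ≤ dim V (m + n + e) - dim V (n + e) - dim V (m + e) + dim V e = m n`.

The bound holds for every finite set of singular points, so there are only finitely many of them.
-/

theorem totalDegree_pderiv_lt_s16 {σ : Type*} {q : MvPolynomial σ ℝ} {i : σ}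
    (hne : pderiv i q ≠ 0) : (pderiv i q).totalDegree < q.totalDegree := by
  obtain ⟨m, hm, hmax⟩ := Finset.exists_mem_eq_sup (pderiv i q).support
    (support_nonempty.mpr hne) (fun s => s.sum fun _ e => e)
  have hmq : m + Finsupp.single i 1 ∈ q.support := by
    rw [mem_support_iff, coeff_pderiv] at hm
    exact mem_support_iff.mpr (left_ne_zero_of_mul hm)
  have h1 := le_totalDegree hmq
  rw [Finsupp.sum_add_index' (by simp) (by simp), Finsupp.sum_single_index rfl] at h1
  have h2 : (pderiv i q).totalDegree = m.sum fun _ e => e := hmax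
  omega

theorem totalDegree_pderiv_le_s16 {σ : Type*} (i : σ) (q : MvPolynomial σ ℝ) :
    (pderiv i q).totalDegree ≤ q.totalDegree := by
  rcases eq_or_ne (pderiv i q) 0 with h | h
  · simp [h]
  · exact (totalDegree_pderiv_lt_s16 h).le

theorem eq_zero_of_dvd_pderiv {σ : Type*} {q : MvPolynomial σ ℝ} {i : σ}
    (h : q ∣ pderiv i q) : pderiv i q = 0 := by
  by_contra hne
  exact (totalDegree_pderiv_lt_s16 hne).not_ge (totalDegree_le_of_dvd_of_isDomain h hne)

theorem totalDegree_eq_zero_of_pderiv_eq_zero {σ : Type*} {q : MvPolynomial σ ℝ}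
    (h : ∀ i, pderiv i q = 0) : q.totalDegree = 0 := by
  rw [totalDegree_eq_zero_iff]
  intro m hm i
  by_contra hi
  have hle : Finsupp.single i 1 ≤ m := by
    rw [Finsupp.single_le_iff]; omega
  have h1 := coeff_pderiv (i := i) q (m - Finsupp.single i 1)
  rw [h i, tsub_add_cancel_of_le hle, coeff_zero] at h1
  rcases mul_eq_zero.mp h1.symm with h2 | h2
  · exact mem_support_iff.mp hm h2
  · exact Nat.cast_add_one_ne_zero _ h2

/-- A squarefree polynomial is coprime to its derivative in some direction `(1, t)`. -/
theorem exists_isRelPrime_directional {p : MvPolynomial (Fin 2) ℝ} (hp : p ≠ 0)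
    (hsf : Squarefree p) :
    ∃ t : ℕ, IsRelPrime p (pderiv 0 p + C (t : ℝ) * pderiv 1 p) := by
  classical
  by_contra! H
  have key : ∀ t : ℕ, ∃ q ∈ UniqueFactorizationMonoid.factors p,
      q ∣ pderiv 0 p + C (t : ℝ) * pderiv 1 p := by
    intro t
    have h1 := H t
    rw [UniqueFactorizationMonoid.isRelPrime_iff_no_prime_factors hp] at h1
    push Not at h1
    obtain ⟨q, hq, hq', hqp⟩ := h1
    obtain ⟨q', hmem, hass⟩ :=
      UniqueFactorizationMonoid.exists_mem_factors_of_dvd hp hqp.irreducible hq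
    exact ⟨q', hmem, hass.symm.dvd.trans hq'⟩
  choose F hF hdvd using key
  -- Two values of `t` share a factor of `p`, by the pigeonhole principle.
  obtain ⟨s, t, hst, hFst⟩ := Finite.exists_ne_map_eq_of_infinite
    (fun t => (⟨F t, Multiset.mem_toFinset.mpr (hF t)⟩ :
      (UniqueFactorizationMonoid.factors p).toFinset))
  replace hFst : F s = F t := congrArg Subtype.val hFst
  have hq : Prime (F s) := UniqueFactorizationMonoid.prime_of_factor _ (hF s)
  have hs := hdvd s
  have ht := hdvd t
  rw [← hFst] at ht
  have hqp : F s ∣ p := UniqueFactorizationMonoid.dvd_of_mem_factors (hF s)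
  generalize F s = q at *
  have hunit : IsUnit (C ((s : ℝ) - t) : MvPolynomial (Fin 2) ℝ) := by
    rw [isUnit_map_iff, isUnit_iff_ne_zero]
    exact sub_ne_zero.mpr (by exact_mod_cast hst)
  -- The difference of the two directional derivatives is `(s - t) ∂p/∂y`.
  have h1 : q ∣ pderiv 1 p := by
    rw [← hunit.dvd_mul_left]
    convert dvd_sub hs ht using 1
    rw [C_sub]; ring
  have h0 : q ∣ pderiv 0 p := (dvd_add_left (h1.mul_left _)).mp hs
  obtain ⟨r, rfl⟩ := hqp
  have hqr : ¬ q ∣ r := fun h => hq.not_isUnit (hsf q (mul_dvd_mul_left q h))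
  have hall : ∀ i : Fin 2, pderiv i q = 0 := by
    intro i
    apply eq_zero_of_dvd_pderiv
    have h : q ∣ pderiv i (q * r) := by fin_cases i <;> assumption
    rw [pderiv_mul, dvd_add_left (dvd_mul_right _ _)] at h
    exact (hq.dvd_or_dvd h).resolve_right hqr
  have := totalDegree_eq_zero_of_pderiv_eq_zero hall
  rw [totalDegree_eq_zero_iff_eq_C] at this
  refine hq.not_isUnit ?_
  rw [this] at hq ⊢
  rw [isUnit_map_iff, isUnit_iff_ne_zero]
  intro h
  exact hq.ne_zero (by rw [h, C_0])

theorem two_mul_finrank_restrictTotalDegree (k : ℕ) :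
    2 * Module.finrank ℝ (restrictTotalDegree (Fin 2) ℝ k) = (k + 1) * (k + 2) := by
  classical
  have h : {n : Fin 2 →₀ ℕ | (n.sum fun _ e => e) ≤ k} =
    ((Finset.range (k + 1)).biUnion fun j => (Finset.univ : Finset (Fin 2)).finsuppAntidiag j : Finset _) := by
    ext n
    simp [Finsupp.sum_fintype]
  have h1 : Module.finrank ℝ (restrictTotalDegree (Fin 2) ℝ k) =
      Nat.card {n : Fin 2 →₀ ℕ | (n.sum fun _ e => e) ≤ k} := 
    Module.finrank_eq_nat_card_basis (basisRestrictSupport ℝ _)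
  rw [h1, h, Nat.card_coe_set_eq, Set.ncard_coe_finset, Finset.card_biUnion]
  · simp only [Finset.card_finsuppAntidiag_nat_eq_choose]
    simp
    clear h h1
    induction k with
    | zero => simp
    | succ k ih => rw [Finset.sum_range_succ, mul_add, ih, add_comm 1, Nat.choose_succ_self_right]; ring
  · intro a _ b _ hab
    rw [Function.onFun, Finset.disjoint_left]
    intro x hx hy
    simp at hx hy
    omega

/-- The separating polynomial is the product over `t ∈ S \ {s}` of the linear forms
`x ↦ ⟨s - t, x - t⟩`, which vanish at `t` and are positive at `s`. -/
theorem exists_separating (S : Finset (Fin 2 → ℝ)) (s : Fin 2 → ℝ) :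
    ∃ e : MvPolynomial (Fin 2) ℝ, e.totalDegree ≤ S.card ∧ eval s e ≠ 0 ∧
      ∀ t ∈ S, t ≠ s → eval t e = 0 := by
  classical
  refine ⟨∏ t ∈ S.erase s, (C (s 0 - t 0) * (X 0 - C (t 0)) + C (s 1 - t 1) * (X 1 - C (t 1))),
    ?_, ?_, ?_⟩
  · refine (totalDegree_finsetProd _ _).trans ?_
    refine (Finset.sum_le_card_nsmul _ _ 1 ?_).trans ?_
    · intro t _
      refine (totalDegree_add _ _).trans (max_le ?_ ?_) <;>
      · refine (totalDegree_mul _ _).trans ?_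
        rw [totalDegree_C, zero_add]
        refine (totalDegree_sub _ _).trans ?_
        simp
    · simpa using Finset.card_le_card (Finset.erase_subset _ _)
  · rw [map_prod, Finset.prod_ne_zero_iff]
    intro t ht h
    apply Finset.ne_of_mem_erase ht
    simp at h
    ext i
    fin_cases i <;> simp <;> nlinarith [mul_self_nonneg (s 0 - t 0), mul_self_nonneg (s 1 - t 1)]
  · intro t ht hne
    rw [map_prod]
    exact Finset.prod_eq_zero (Finset.mem_erase.mpr ⟨hne, ht⟩) (by simp)

/-- Weak Bézout bound: coprime plane curves of degrees `m` and `n` meet in at most `m * n` points. -/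
theorem card_common_zeros_le {f g : MvPolynomial (Fin 2) ℝ} (hg : g ≠ 0)
    (hfg : IsRelPrime f g) (S : Finset (Fin 2 → ℝ))
    (hS : ∀ s ∈ S, eval s f = 0 ∧ eval s g = 0) :
    S.card ≤ f.totalDegree * g.totalDegree := by
  classical
  set m := f.totalDegree with hm
  set n := g.totalDegree with hn
  set e := S.card with he
  let V : ℕ → Submodule ℝ (MvPolynomial (Fin 2) ℝ) := fun k => restrictTotalDegree (Fin 2) ℝ k
  have hV : ∀ k q, q ∈ V k ↔ q.totalDegree ≤ k := fun k q => mem_restrictTotalDegree _ k q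
  have hfin : ∀ k, Module.Finite ℝ (V k) := fun k => by dsimp only [V]; infer_instance
  -- evaluation at the points of `S`, on polynomials of degree at most `m + n + e`
  let ev : V (m + n + e) →ₗ[ℝ] (S → ℝ) :=
    (LinearMap.pi fun s : S => (aeval (R := ℝ) (s : Fin 2 → ℝ)).toLinearMap) ∘ₗ (V _).subtype
  have hev : ∀ q s, ev q s = eval (s : Fin 2 → ℝ) (q : MvPolynomial (Fin 2) ℝ) := by
    intro q s
    simp [ev, aeval_eq_eval]
  have hsurj : Function.Surjective ev := by
    rw [← LinearMap.range_eq_top, eq_top_iff, ← (Pi.basisFun ℝ S).span_eq, Submodule.span_le]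
    rintro _ ⟨s, rfl⟩
    obtain ⟨q, hdeg, hne, hz⟩ := exists_separating S s
    have hq : q ∈ V (m + n + e) := (hV _ _).mpr (by omega)
    refine ⟨(eval (s : Fin 2 → ℝ) q)⁻¹ • ⟨q, hq⟩, ?_⟩
    ext t
    rw [map_smul, Pi.smul_apply, hev, Pi.basisFun_apply]
    by_cases hts : t = s
    · subst hts
      simp [hne]
    · simp [hts, hz t t.2 (fun h => hts (Subtype.ext h))]
  -- the map `(a, b) ↦ a * f + b * g`
  let Φ : (V (n + e) × V (m + e)) →ₗ[ℝ] V (m + n + e) :=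
    LinearMap.codRestrict _
      (LinearMap.coprod ((LinearMap.mulRight ℝ f) ∘ₗ (V _).subtype)
        ((LinearMap.mulRight ℝ g) ∘ₗ (V _).subtype)) (by
        rintro ⟨⟨a, ha⟩, ⟨b, hb⟩⟩
        rw [hV] at ha hb ⊢
        refine (totalDegree_add _ _).trans (max_le ?_ ?_) <;>
        · refine (totalDegree_mul _ _).trans ?_
          simp only [LinearMap.fst_apply, LinearMap.snd_apply, Submodule.subtype_apply]
          omega)
  have hΦ : ∀ x, (Φ x : MvPolynomial (Fin 2) ℝ) = x.1 * f + x.2 * g := fun x => rfl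
  -- the syzygies `c ↦ (c * g, -(c * f))`
  let Ψ : V e →ₗ[ℝ] (V (n + e) × V (m + e)) :=
    LinearMap.prod
      (LinearMap.codRestrict _ ((LinearMap.mulRight ℝ g) ∘ₗ (V _).subtype) (by
        rintro ⟨c, hc⟩
        rw [hV] at hc ⊢
        refine (totalDegree_mul _ _).trans ?_
        dsimp only [Submodule.subtype_apply]
        omega))
      (LinearMap.codRestrict _ (-((LinearMap.mulRight ℝ f) ∘ₗ (V _).subtype)) (by
        rintro ⟨c, hc⟩
        rw [hV] at hc ⊢
        refine (totalDegree_neg _).le.trans ((totalDegree_mul _ _).trans ?_)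
        dsimp only [Submodule.subtype_apply]
        omega))
  have hker : LinearMap.ker Φ ≤ LinearMap.range Ψ := by
    rintro ⟨⟨a, ha⟩, ⟨b, hb⟩⟩ hx
    have h0 : a * f + b * g = 0 := by
      have := hΦ (⟨a, ha⟩, ⟨b, hb⟩)
      rw [LinearMap.mem_ker.mp hx] at this
      exact this.symm
    have hdvd : g ∣ a := by
      apply hfg.symm.dvd_of_dvd_mul_right (y := a)
      exact ⟨-b, by linear_combination h0⟩
    obtain ⟨c, rfl⟩ := hdvd
    have hb' : b = -(c * f) := by
      apply mul_right_cancel₀ hg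
      linear_combination h0
    have hc : c ∈ V e := by
      rw [hV] at ha ⊢
      rcases eq_or_ne c 0 with rfl | hc0
      · simp
      · rw [totalDegree_mul_of_isDomain hg hc0] at ha
        omega
    refine ⟨⟨c, hc⟩, ?_⟩
    ext1
    · exact Subtype.ext (mul_comm c g)
    · exact Subtype.ext hb'.symm
  have hrange : LinearMap.range Φ ≤ LinearMap.ker ev := by
    rintro _ ⟨x, rfl⟩
    rw [LinearMap.mem_ker]
    ext s
    rw [hev, hΦ]
    simp [(hS s s.2).1, (hS s s.2).2]
  have e1 := Φ.finrank_range_add_finrank_ker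
  have e2 := ev.finrank_range_add_finrank_ker
  rw [LinearMap.range_eq_top.mpr hsurj, finrank_top, Module.finrank_fintype_fun_eq_card,
    Fintype.card_coe] at e2
  rw [Module.finrank_prod] at e1
  have e3 := (Submodule.finrank_mono hker).trans (LinearMap.finrank_range_le Ψ)
  have e4 := Submodule.finrank_mono hrange
  have d0 := two_mul_finrank_restrictTotalDegree e
  have d1 := two_mul_finrank_restrictTotalDegree (n + e)
  have d2 := two_mul_finrank_restrictTotalDegree (m + e)
  have d3 := two_mul_finrank_restrictTotalDegree (m + n + e)
  change 2 * Module.finrank ℝ (V _) = _ at d0 d1 d2 d3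
  nlinarith

/-- A nonzero squarefree polynomial `p ∈ ℝ[x,y]` of total degree `d ≥ 1` has at most
`d²` points where `p` and both its partial derivatives vanish. -/
theorem common_zeros_of_squarefree_bivariate (p : MvPolynomial (Fin 2) ℝ)
    (hp : p ≠ 0) (hsf : Squarefree p) (d : ℕ) (hd : p.totalDegree = d) (hd1 : 1 ≤ d) :
    {x : Fin 2 → ℝ | eval x p = 0 ∧ ∀ i : Fin 2, eval x (pderiv i p) = 0}.Finite ∧
      {x : Fin 2 → ℝ | eval x p = 0 ∧ ∀ i : Fin 2, eval x (pderiv i p) = 0}.ncard ≤ d ^ 2 := by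
  obtain ⟨t, ht⟩ := exists_isRelPrime_directional hp hsf
  have hg : pderiv 0 p + C (t : ℝ) * pderiv 1 p ≠ 0 := by
    intro h
    rw [h, isRelPrime_zero_right, isUnit_iff_totalDegree_of_isReduced] at ht
    omega
  have hdeg : (pderiv 0 p + C (t : ℝ) * pderiv 1 p).totalDegree ≤ d := by
    have hle : ∀ i, (pderiv i p).totalDegree ≤ d := fun i => hd ▸ totalDegree_pderiv_le_s16 i p
    refine (totalDegree_add _ _).trans (max_le (hle 0) ((totalDegree_mul _ _).trans ?_))
    rw [totalDegree_C, zero_add]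
    exact hle 1
  have hbound : ∀ S : Finset (Fin 2 → ℝ),
      (S : Set (Fin 2 → ℝ)) ⊆ {x | eval x p = 0 ∧ ∀ i : Fin 2, eval x (pderiv i p) = 0} →
      S.card ≤ d ^ 2 := by
    intro S hS
    refine (card_common_zeros_le hg ht S fun s hs => ⟨(hS hs).1, ?_⟩).trans ?_
    · simp [(hS hs).2]
    · rw [hd, sq]
      exact Nat.mul_le_mul_left d hdeg
  have hfin : {x : Fin 2 → ℝ | eval x p = 0 ∧ ∀ i : Fin 2, eval x (pderiv i p) = 0}.Finite := by
    by_contra hinf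
    obtain ⟨S, hS, hcard⟩ := Set.Infinite.exists_subset_card_eq hinf (d ^ 2 + 1)
    have := hbound S hS
    omega
  refine ⟨hfin, ?_⟩
  rw [Set.ncard_eq_toFinset_card _ hfin]
  exact hbound _ (by simp)
end
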